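/- arXiv:1712.06371 — 5 statements merged into one kernel-verified Lean document; each statement's English description precedes it below -/
import Mathlib

section
/- Suppose Assumptions (K) and (A_p) hold, let ε₀ = R/(8M), and let n be a positive integer and ε > 0 with (n+1)ε ≤ ε₀. Then the map R^[n]_θ(u) = −(∂_uΦ^[n]_θ(u))^{-1} δ^[n]_θ(u) is well-defined for θ ∈ 𝕋 and u ∈ K_{R/2}, and there exists a constant C, independent of ε, such that for all integers ν ≥ 0 and ξ ≥ 0 with ν + ξ ≤ p one has sup_{θ∈𝕋, u∈K_{R/2}} ‖∂_θ^ν ∂_u^ξ R^[n]_θ(u)‖ ≤ C·ε^n; equivalently, the mixed derivatives ∂_t^ν ∂_u^ξ of the map (t,u) ↦ R^[n]_{t/ε}(u) are bounded on ℝ × K_{R/2} by C·ε^{n−ν}. -/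
open Set

/-- The set `K_ρ = {u + ũ : u ∈ closure K, ‖ũ‖ ≤ ρ}` inside the complexification `Xc` of `X`. -/
def Kset {X Xc : Type*} [NormedAddCommGroup X] [NormedSpace ℝ X]
    [NormedAddCommGroup Xc] [NormedSpace ℂ Xc]
    (ι : X →ₗᵢ[ℝ] Xc) (K : Set X) (ρ : ℝ) : Set Xc :=
  {z | ∃ u ∈ closure K, ∃ w : Xc, ‖w‖ ≤ ρ ∧ z = ι u + w}

/-- θ-average `⟨g⟩(u) = ∫₀¹ g_θ(u) dθ` of a 1-periodic map. -/
noncomputable def thAvg {Xc : Type*} [NormedAddCommGroup Xc] [NormedSpace ℂ Xc]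
    (g : ℝ → Xc → Xc) (u : Xc) : Xc :=
  ∫ θ in (0:ℝ)..1, g θ u

/-- Averaged vector field `F(u) = (∂_u⟨φ⟩(u))⁻¹ ⟨f∘φ⟩(u)`. -/
noncomputable def aveField {Xc : Type*} [NormedAddCommGroup Xc] [NormedSpace ℂ Xc]
    (f φ : ℝ → Xc → Xc) (u : Xc) : Xc :=
  (fderiv ℂ (thAvg φ) u).inverse (thAvg (fun θ v => f θ (φ θ v)) u)

/-- The stroboscopic averaging iteration. -/
noncomputable def PhiIter {Xc : Type*} [NormedAddCommGroup Xc] [NormedSpace ℂ Xc]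
    (f : ℝ → Xc → Xc) (ε : ℝ) : ℕ → ℝ → Xc → Xc
  | 0 => fun _ u => u
  | k+1 => fun θ u => u + ε • ∫ τ in (0:ℝ)..θ,
      (f τ (PhiIter f ε k τ u) -
        fderiv ℂ (PhiIter f ε k τ) u (aveField f (PhiIter f ε k) u))

/-- The defect `δ^[k]_θ(u)`. -/
noncomputable def defect {Xc : Type*} [NormedAddCommGroup Xc] [NormedSpace ℂ Xc]
    (f : ℝ → Xc → Xc) (ε : ℝ) (k : ℕ) (θ : ℝ) (u : Xc) : Xc :=
  (1/ε) • deriv (fun τ => PhiIter f ε k τ u) θ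
    + fderiv ℂ (PhiIter f ε k θ) u (aveField f (PhiIter f ε k) u)
    - f θ (PhiIter f ε k θ u)

/-- The map `R^[n]_θ(u) = −(∂_uΦ^[n]_θ(u))⁻¹ δ^[n]_θ(u)` of the pullback formulation. -/
noncomputable def Rmap {Xc : Type*} [NormedAddCommGroup Xc] [NormedSpace ℂ Xc]
    (f : ℝ → Xc → Xc) (ε : ℝ) (n : ℕ) (θ : ℝ) (u : Xc) : Xc :=
  -((fderiv ℂ (PhiIter f ε n θ) u).inverse (defect f ε n θ u))

/-!
By Cauchy's estimates the iterates `Φ^[k]` stay `r/4`-close to the identity and their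
`u`-derivatives stay within `1/2` of it, so that the averaged fields `F^[k]` exist. The increment
`f_θ(Φ_θ(u)) − ∂_uΦ_θ(u) F(u)` has zero mean and depends in a Lipschitz way on `Φ`, hence
`Φ^[k+1] − Φ^[k] = O(ε^(k+1))` by induction on `k`. The defect `δ^[k+1]` is minus the difference of
two consecutive increments, hence is `O(ε^(k+1))` as well.

Each application of Cauchy's estimates costs `r = R/(n+1)` of the domain, so the `n + 1` of them
lead from `K_{2R}` to `K_R`. All estimates are carried out for families of class `C^{p-1,1}` in `θ`:
this class is stable under products, composition and inversion, and the Lipschitz constant of the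
derivative of order `p - 1` bounds the one of order `p`.
-/

namespace StroboscopicAveraging

open Metric Filter Topology
open scoped ContDiff

universe u

variable {U E F G : Type u} [NormedAddCommGroup U] [NormedSpace ℂ U]
  [NormedAddCommGroup E] [NormedSpace ℂ E] [NormedAddCommGroup F] [NormedSpace ℂ F]
  [NormedAddCommGroup G] [NormedSpace ℂ G] {I : Type*}
  {O O' : Set U} {a b : I → ℝ} {q : ℕ} {r s : ℝ}

section Preliminaries

theorem mem_nhds_of_thickening_subset {X : Type*} [PseudoMetricSpace X] {O O' : Set X}
    (hr : 0 < r) (hO : thickening r O' ⊆ O) {u : X} (hu : u ∈ O') : O ∈ 𝓝 u :=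
  mem_of_superset (ball_mem_nhds u hr) ((ball_subset_thickening hu r).trans hO)

theorem thickening_half_thickening_subset {X : Type*} [PseudoMetricSpace X] (s : ℝ) (W : Set X) :
    thickening (s / 2) (thickening (s / 2) W) ⊆ thickening s W := by
  simpa using thickening_thickening_subset (s / 2) (s / 2) W

theorem norm_fderiv_le_of_norm_le {g : U → E} {C : ℝ} (hr : 0 < r) (hO : thickening r O' ⊆ O)
    (hg : DifferentiableOn ℂ g O) (hC : ∀ z ∈ O, ‖g z‖ ≤ C) {u : U} (hu : u ∈ O') :
    ‖fderiv ℂ g u‖ ≤ 2 * C / r := by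
  have hball : ball u r ⊆ O := (ball_subset_thickening hu r).trans hO
  refine Complex.norm_fderiv_le_div_of_mapsTo_ball (hg.mono hball) (fun z hz ↦ ?_) hr
  rw [mem_closedBall, dist_eq_norm, two_mul]
  exact norm_sub_le_of_le (hC z (hball hz)) (hC u (hball (mem_ball_self hr)))

theorem norm_sub_le_of_norm_le_of_thickening {g : U → E} {W : Set U} {C : ℝ} (hs : 0 < s)
    (hg : DifferentiableOn ℂ g (thickening s W)) (hC : ∀ z ∈ thickening s W, ‖g z‖ ≤ C)
    {x y : U} (hx : x ∈ W) (hy : y ∈ thickening s W) :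
    ‖g y - g x‖ ≤ 2 * C / s * ‖y - x‖ := by
  have hball : ball x s ⊆ thickening s W := ball_subset_thickening hx s
  have hosc : ∀ z ∈ thickening s W, ‖g z - g x‖ ≤ 2 * C := fun z hz ↦ by
    rw [two_mul]
    exact norm_sub_le_of_le (hC z hz) (hC x (hball (mem_ball_self hs)))
  by_cases hxy : y ∈ ball x s
  · have := Complex.dist_le_div_mul_dist_of_mapsTo_ball (R₂ := 2 * C) (hg.mono hball)
      (fun z hz ↦ by rw [mem_closedBall, dist_eq_norm]; exact hosc z (hball hz)) hxy
    rwa [dist_eq_norm, dist_eq_norm] at this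
  · rw [mem_ball, dist_eq_norm, not_lt] at hxy
    have hC0 : 0 ≤ C := (norm_nonneg _).trans (hC y hy)
    calc ‖g y - g x‖ ≤ 2 * C := hosc y hy
      _ = 2 * C / s * s := by field_simp
      _ ≤ 2 * C / s * ‖y - x‖ := by gcongr

theorem hasDerivAt_of_norm_sub_le_sq {V : Type*} [NormedAddCommGroup V] [NormedSpace ℝ V]
    {φ : ℝ → V} {d : V} {θ C : ℝ}
    (h : ∀ τ, ‖φ τ - φ θ - (τ - θ) • d‖ ≤ C * |τ - θ| ^ 2) : HasDerivAt φ d θ := by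
  have hO : (fun τ ↦ φ τ - φ θ - (τ - θ) • d) =O[𝓝 θ] fun τ ↦ ‖τ - θ‖ ^ 2 :=
    Asymptotics.IsBigO.of_bound C (Eventually.of_forall fun τ ↦ by simpa using h τ)
  exact hasDerivAt_iff_isLittleO.2
    (hO.trans_isLittleO (Asymptotics.isLittleO_pow_sub_sub θ one_lt_two))

theorem norm_sub_sub_smul_le_of_lipschitz {V : Type*} [NormedAddCommGroup V] [NormedSpace ℝ V]
    {φ φ' : ℝ → V} {L : ℝ}
    (hφ : ∀ θ, HasDerivAt φ (φ' θ) θ) (hL : ∀ θ τ, ‖φ' θ - φ' τ‖ ≤ L * |θ - τ|) (θ τ : ℝ) :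
    ‖φ τ - φ θ - (τ - θ) • φ' θ‖ ≤ L * |τ - θ| ^ 2 := by
  have hderiv : ∀ s ∈ uIcc θ τ, HasDerivWithinAt (fun s ↦ φ s - s • φ' θ) (φ' s - φ' θ)
      (uIcc θ τ) s := fun s _ ↦ by
    simpa only [one_smul] using
      ((hφ s).fun_sub ((hasDerivAt_id' s).smul_const (φ' θ))).hasDerivWithinAt
  have hL0 : 0 ≤ L := by simpa using (norm_nonneg _).trans (hL 1 0)
  have hbound : ∀ s ∈ uIcc θ τ, ‖φ' s - φ' θ‖ ≤ L * |τ - θ| := fun s hs ↦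
    (hL s θ).trans (mul_le_mul_of_nonneg_left (abs_sub_left_of_mem_uIcc hs) hL0)
  calc ‖φ τ - φ θ - (τ - θ) • φ' θ‖ = ‖φ τ - τ • φ' θ - (φ θ - θ • φ' θ)‖ := by
        rw [sub_smul]; congr 1; abel
    _ ≤ L * |τ - θ| * ‖τ - θ‖ := Convex.norm_image_sub_le_of_norm_hasDerivWithin_le hderiv hbound
        (convex_uIcc θ τ) left_mem_uIcc right_mem_uIcc
    _ = L * |τ - θ| ^ 2 := by rw [Real.norm_eq_abs]; ring

end Preliminaries

section Families

/-- Families `g i θ u`, smooth in `u ∈ O`, that are `O(a i)` and `O(a i)`-Lipschitz in `θ`,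
uniformly in the parameter `i`. Complex differentiability in `u` would be enough mathematically,
but Mathlib does not know that it implies smoothness when the domain is a Banach space. -/
structure LipFamily (O : Set U) (a : I → ℝ) (g : I → ℝ → U → E) : Prop where
  contDiffOn : ∀ i θ, ContDiffOn ℂ ∞ (g i θ) O
  weight_nonneg : ∀ i, 0 ≤ a i
  bound : ∃ C, 0 ≤ C ∧ ∀ i θ, ∀ u ∈ O, ‖g i θ u‖ ≤ C * a i
  lipschitz : ∃ C, 0 ≤ C ∧ ∀ i θ τ, ∀ u ∈ O, ‖g i θ u - g i τ u‖ ≤ C * a i * |θ - τ|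

/-- Families which are `q` times differentiable in `θ`, the derivatives of order `≤ q` being
weighted Lipschitz families: uniformly in `i`, the family is `O(a i)` in the class `C^{q,1}`
in `θ`. -/
def SmoothFamily : ℕ → (O : Set U) → (a : I → ℝ) → (g : I → ℝ → U → E) → Prop
  | 0, O, a, g => LipFamily O a g
  | q + 1, O, a, g => LipFamily O a g ∧ ∃ g' : I → ℝ → U → E,
      (∀ i θ, ∀ u ∈ O, HasDerivAt (fun τ ↦ g i τ u) (g' i θ u) θ) ∧ SmoothFamily q O a g'

theorem SmoothFamily.lipFamily {g : I → ℝ → U → E} (hg : SmoothFamily q O a g) :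
    LipFamily O a g :=
  match q, hg with
  | 0, hg => hg
  | _ + 1, hg => hg.1

theorem SmoothFamily.of_succ {g : I → ℝ → U → E} (hg : SmoothFamily (q + 1) O a g) :
    SmoothFamily q O a g := by
  induction q generalizing g with
  | zero => exact hg.1
  | succ q ih =>
    obtain ⟨hg₀, g', hd, hg'⟩ := hg
    exact ⟨hg₀, g', hd, ih hg'⟩

theorem LipFamily.congr {g h : I → ℝ → U → E} (hg : LipFamily O a g)
    (hgh : ∀ i θ, ∀ u ∈ O, h i θ u = g i θ u) : LipFamily O a h where
  contDiffOn i θ := (hg.contDiffOn i θ).congr (hgh i θ)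
  weight_nonneg := hg.weight_nonneg
  bound := by
    obtain ⟨C, hC, hb⟩ := hg.bound
    exact ⟨C, hC, fun i θ u hu ↦ by rw [hgh i θ u hu]; exact hb i θ u hu⟩
  lipschitz := by
    obtain ⟨C, hC, hl⟩ := hg.lipschitz
    exact ⟨C, hC, fun i θ τ u hu ↦ by rw [hgh i θ u hu, hgh i τ u hu]; exact hl i θ τ u hu⟩

theorem SmoothFamily.congr {g h : I → ℝ → U → E} (hg : SmoothFamily q O a g)
    (hgh : ∀ i θ, ∀ u ∈ O, h i θ u = g i θ u) : SmoothFamily q O a h := by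
  cases q with
  | zero => exact LipFamily.congr hg hgh
  | succ q =>
    obtain ⟨hg₀, g', hd, hg'⟩ := hg
    exact ⟨hg₀.congr hgh, g', fun i θ u hu ↦ (hd i θ u hu).congr_of_eventuallyEq
      (Eventually.of_forall fun τ ↦ hgh i τ u hu), hg'⟩

theorem LipFamily.mono {g : I → ℝ → U → E} (hg : LipFamily O a g) (hO : O' ⊆ O) :
    LipFamily O' a g where
  contDiffOn i θ := (hg.contDiffOn i θ).mono hO
  weight_nonneg := hg.weight_nonneg
  bound := by
    obtain ⟨C, hC, hb⟩ := hg.bound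
    exact ⟨C, hC, fun i θ u hu ↦ hb i θ u (hO hu)⟩
  lipschitz := by
    obtain ⟨C, hC, hl⟩ := hg.lipschitz
    exact ⟨C, hC, fun i θ τ u hu ↦ hl i θ τ u (hO hu)⟩

theorem SmoothFamily.mono {g : I → ℝ → U → E} (hg : SmoothFamily q O a g) (hO : O' ⊆ O) :
    SmoothFamily q O' a g := by
  induction q generalizing g with
  | zero => exact LipFamily.mono hg hO
  | succ q ih =>
    obtain ⟨hg₀, g', hd, hg'⟩ := hg
    exact ⟨hg₀.mono hO, g', fun i θ u hu ↦ hd i θ u (hO hu), ih hg'⟩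

theorem LipFamily.of_le_mul {g : I → ℝ → U → E} {L : ℝ} (hg : LipFamily O a g)
    (hb : ∀ i, 0 ≤ b i) (hL : 0 ≤ L) (hab : ∀ i, a i ≤ L * b i) : LipFamily O b g where
  contDiffOn := hg.contDiffOn
  weight_nonneg := hb
  bound := by
    obtain ⟨C, hC, hbd⟩ := hg.bound
    refine ⟨C * L, by positivity, fun i θ u hu ↦ (hbd i θ u hu).trans ?_⟩
    rw [mul_assoc]
    gcongr
    exact hab i
  lipschitz := by
    obtain ⟨C, hC, hl⟩ := hg.lipschitz
    refine ⟨C * L, by positivity, fun i θ τ u hu ↦ (hl i θ τ u hu).trans ?_⟩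
    rw [mul_assoc C L]
    gcongr
    exact hab i

theorem SmoothFamily.of_le_mul {g : I → ℝ → U → E} {L : ℝ} (hg : SmoothFamily q O a g)
    (hb : ∀ i, 0 ≤ b i) (hL : 0 ≤ L) (hab : ∀ i, a i ≤ L * b i) : SmoothFamily q O b g := by
  induction q generalizing g with
  | zero => exact LipFamily.of_le_mul hg hb hL hab
  | succ q ih =>
    obtain ⟨hg₀, g', hd, hg'⟩ := hg
    exact ⟨hg₀.of_le_mul hb hL hab, g', hd, ih hg'⟩

theorem LipFamily.comp_index {J : Type*} {g : I → ℝ → U → E} (hg : LipFamily O a g)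
    (e : J → I) : LipFamily O (a ∘ e) (fun j ↦ g (e j)) where
  contDiffOn j := hg.contDiffOn (e j)
  weight_nonneg j := hg.weight_nonneg (e j)
  bound := by
    obtain ⟨C, hC, hb⟩ := hg.bound
    exact ⟨C, hC, fun j ↦ hb (e j)⟩
  lipschitz := by
    obtain ⟨C, hC, hl⟩ := hg.lipschitz
    exact ⟨C, hC, fun j ↦ hl (e j)⟩

theorem SmoothFamily.comp_index {J : Type*} {g : I → ℝ → U → E} (hg : SmoothFamily q O a g)
    (e : J → I) : SmoothFamily q O (a ∘ e) (fun j ↦ g (e j)) := by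
  induction q generalizing g with
  | zero => exact LipFamily.comp_index hg e
  | succ q ih =>
    obtain ⟨hg₀, g', hd, hg'⟩ := hg
    exact ⟨hg₀.comp_index e, _, fun j ↦ hd (e j), ih hg'⟩

theorem LipFamily.add {g h : I → ℝ → U → E} (hg : LipFamily O a g) (hh : LipFamily O a h) :
    LipFamily O a (fun i θ u ↦ g i θ u + h i θ u) where
  contDiffOn i θ := (hg.contDiffOn i θ).add (hh.contDiffOn i θ)
  weight_nonneg := hg.weight_nonneg
  bound := by
    obtain ⟨C, hC, hbg⟩ := hg.bound
    obtain ⟨D, hD, hbh⟩ := hh.bound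
    refine ⟨C + D, by positivity, fun i θ u hu ↦ ?_⟩
    rw [add_mul]
    exact norm_add_le_of_le (hbg i θ u hu) (hbh i θ u hu)
  lipschitz := by
    obtain ⟨C, hC, hlg⟩ := hg.lipschitz
    obtain ⟨D, hD, hlh⟩ := hh.lipschitz
    refine ⟨C + D, by positivity, fun i θ τ u hu ↦ ?_⟩
    rw [add_mul, add_mul, add_sub_add_comm]
    exact norm_add_le_of_le (hlg i θ τ u hu) (hlh i θ τ u hu)

theorem SmoothFamily.add {g h : I → ℝ → U → E} (hg : SmoothFamily q O a g)
    (hh : SmoothFamily q O a h) : SmoothFamily q O a (fun i θ u ↦ g i θ u + h i θ u) := by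
  induction q generalizing g h with
  | zero => exact LipFamily.add hg hh
  | succ q ih =>
    obtain ⟨hg₀, g', hdg, hg'⟩ := hg
    obtain ⟨hh₀, h', hdh, hh'⟩ := hh
    exact ⟨hg₀.add hh₀, _, fun i θ u hu ↦ (hdg i θ u hu).add (hdh i θ u hu), ih hg' hh'⟩

theorem LipFamily.bilin (B : E →L[ℂ] F →L[ℂ] G) {g : I → ℝ → U → E} {h : I → ℝ → U → F}
    (hg : LipFamily O a g) (hh : LipFamily O b h) :
    LipFamily O (a * b) (fun i θ u ↦ B (g i θ u) (h i θ u)) where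
  contDiffOn i θ := (B.contDiff.comp_contDiffOn (hg.contDiffOn i θ)).clm_apply (hh.contDiffOn i θ)
  weight_nonneg i := mul_nonneg (hg.weight_nonneg i) (hh.weight_nonneg i)
  bound := by
    obtain ⟨C, hC, hbg⟩ := hg.bound
    obtain ⟨D, hD, hbh⟩ := hh.bound
    refine ⟨‖B‖ * C * D, by positivity, fun i θ u hu ↦ ?_⟩
    calc ‖B (g i θ u) (h i θ u)‖ ≤ ‖B‖ * (C * a i) * (D * b i) :=
          B.le_of_opNorm₂_le_of_le le_rfl (hbg i θ u hu) (hbh i θ u hu)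
      _ = ‖B‖ * C * D * (a i * b i) := by ring
  lipschitz := by
    obtain ⟨C, hC, hbg⟩ := hg.bound
    obtain ⟨D, hD, hbh⟩ := hh.bound
    obtain ⟨C', hC', hlg⟩ := hg.lipschitz
    obtain ⟨D', hD', hlh⟩ := hh.lipschitz
    refine ⟨‖B‖ * (C' * D + C * D'), by positivity, fun i θ τ u hu ↦ ?_⟩
    calc ‖B (g i θ u) (h i θ u) - B (g i τ u) (h i τ u)‖
        = ‖B (g i θ u - g i τ u) (h i θ u) + B (g i τ u) (h i θ u - h i τ u)‖ := by
          simp only [map_sub, sub_apply, sub_add_sub_cancel]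
      _ ≤ ‖B‖ * (C' * a i * |θ - τ|) * (D * b i) + ‖B‖ * (C * a i) * (D' * b i * |θ - τ|) :=
          norm_add_le_of_le
            (B.le_of_opNorm₂_le_of_le le_rfl (hlg i θ τ u hu) (hbh i θ u hu))
            (B.le_of_opNorm₂_le_of_le le_rfl (hbg i τ u hu) (hlh i θ τ u hu))
      _ = ‖B‖ * (C' * D + C * D') * (a i * b i) * |θ - τ| := by ring

theorem SmoothFamily.bilin (B : E →L[ℂ] F →L[ℂ] G) {g : I → ℝ → U → E} {h : I → ℝ → U → F}
    (hg : SmoothFamily q O a g) (hh : SmoothFamily q O b h) :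
    SmoothFamily q O (a * b) (fun i θ u ↦ B (g i θ u) (h i θ u)) := by
  induction q generalizing g h with
  | zero => exact LipFamily.bilin B hg hh
  | succ q ih =>
    have hgq := hg.of_succ
    have hhq := hh.of_succ
    obtain ⟨hg₀, g', hdg, hg'⟩ := hg
    obtain ⟨hh₀, h', hdh, hh'⟩ := hh
    exact ⟨hg₀.bilin B hh₀, _, fun i θ u hu ↦ (B.bilinearRestrictScalars ℝ).hasDerivAt_of_bilinear
      (fun _ ↦ hdg i θ u hu) (fun _ ↦ hdh i θ u hu), (ih hgq hh').add (ih hg' hhq)⟩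

theorem SmoothFamily.clm_apply {A : I → ℝ → U → E →L[ℂ] F} {g : I → ℝ → U → E}
    (hA : SmoothFamily q O a A) (hg : SmoothFamily q O b g) :
    SmoothFamily q O (a * b) (fun i θ u ↦ A i θ u (g i θ u)) :=
  hA.bilin (ContinuousLinearMap.id ℂ (E →L[ℂ] F)) hg

theorem LipFamily.of_const {g : I → U → E} (ha : ∀ i, 0 ≤ a i)
    (hg : ∀ i, ContDiffOn ℂ ∞ (g i) O)
    (hb : ∃ C, 0 ≤ C ∧ ∀ i, ∀ u ∈ O, ‖g i u‖ ≤ C * a i) :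
    LipFamily O a (fun i _ u ↦ g i u) where
  contDiffOn i _ := hg i
  weight_nonneg := ha
  bound := by
    obtain ⟨C, hC, hb⟩ := hb
    exact ⟨C, hC, fun i _ u hu ↦ hb i u hu⟩
  lipschitz := ⟨0, le_rfl, by simp⟩

theorem SmoothFamily.of_const {g : I → U → E} (ha : ∀ i, 0 ≤ a i)
    (hg : ∀ i, ContDiffOn ℂ ∞ (g i) O)
    (hb : ∃ C, 0 ≤ C ∧ ∀ i, ∀ u ∈ O, ‖g i u‖ ≤ C * a i) :
    SmoothFamily q O a (fun i _ u ↦ g i u) := by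
  induction q generalizing g with
  | zero => exact LipFamily.of_const ha hg hb
  | succ q ih =>
    exact ⟨LipFamily.of_const ha hg hb, fun _ _ _ ↦ 0, fun _ _ _ _ ↦ hasDerivAt_const _ _,
      ih (g := fun _ _ ↦ 0) (fun _ ↦ contDiffOn_const) ⟨0, le_rfl, by simp⟩⟩

theorem SmoothFamily.clm (A : E →L[ℂ] F) {g : I → ℝ → U → E} (hg : SmoothFamily q O a g) :
    SmoothFamily q O a (fun i θ u ↦ A (g i θ u)) := by
  have hA : SmoothFamily q O (1 : I → ℝ) (fun _ _ (_ : U) ↦ A) :=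
    .of_const (fun _ ↦ zero_le_one) (fun _ ↦ contDiffOn_const) ⟨‖A‖, norm_nonneg _, by simp⟩
  simpa only [one_mul] using hA.clm_apply hg

theorem SmoothFamily.neg {g : I → ℝ → U → E} (hg : SmoothFamily q O a g) :
    SmoothFamily q O a (fun i θ u ↦ -g i θ u) := by
  simpa using hg.clm (-ContinuousLinearMap.id ℂ E)

theorem SmoothFamily.sub {g h : I → ℝ → U → E} (hg : SmoothFamily q O a g)
    (hh : SmoothFamily q O a h) : SmoothFamily q O a (fun i θ u ↦ g i θ u - h i θ u) := by
  simpa only [sub_eq_add_neg] using hg.add hh.neg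

theorem SmoothFamily.const_smul {c : I → ℝ} (hc : ∀ i, 0 ≤ c i) {g : I → ℝ → U → E}
    (hg : SmoothFamily q O a g) : SmoothFamily q O (c * a) (fun i θ u ↦ c i • g i θ u) := by
  have hc' : SmoothFamily q O c (fun i _ (_ : U) ↦ (c i : ℂ) • ContinuousLinearMap.id ℂ E) :=
    .of_const hc (fun _ ↦ contDiffOn_const) ⟨1, zero_le_one, fun i _ _ ↦ by
      rw [norm_smul, Complex.norm_of_nonneg (hc i), mul_comm]
      gcongr
      exacts [hc i, ContinuousLinearMap.norm_id_le]⟩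
  simpa using hc'.clm_apply hg

theorem LipFamily.continuous {g : I → ℝ → U → E} (hg : LipFamily O a g) (i : I) {u : U}
    (hu : u ∈ O) : Continuous (fun θ ↦ g i θ u) := by
  obtain ⟨C, hC, hl⟩ := hg.lipschitz
  refine (LipschitzWith.of_dist_le_mul (K := (C * a i).toNNReal) fun θ τ ↦ ?_).continuous
  rw [dist_eq_norm, Real.dist_eq, Real.coe_toNNReal _ (mul_nonneg hC (hg.weight_nonneg i))]
  exact hl i θ τ u hu

theorem LipFamily.exists_norm_sub_sub_smul_le {g g' : I → ℝ → U → E}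
    (hd : ∀ i θ, ∀ u ∈ O, HasDerivAt (fun τ ↦ g i τ u) (g' i θ u) θ) (hg' : LipFamily O a g') :
    ∃ C, 0 ≤ C ∧ ∀ i θ τ, ∀ u ∈ O,
      ‖g i τ u - g i θ u - (τ - θ) • g' i θ u‖ ≤ C * a i * |τ - θ| ^ 2 := by
  obtain ⟨C, hC, hl⟩ := hg'.lipschitz
  exact ⟨C, hC, fun i θ τ u hu ↦ norm_sub_sub_smul_le_of_lipschitz (fun s ↦ hd i s u hu)
    (fun s t ↦ hl i s t u hu) θ τ⟩

theorem LipFamily.differentiableAt {g : I → ℝ → U → E} (hg : LipFamily O a g) (i : I) (θ : ℝ)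
    {u : U} (hu : O ∈ 𝓝 u) : DifferentiableAt ℂ (g i θ) u :=
  ((hg.contDiffOn i θ).contDiffAt hu).differentiableAt (by simp)

theorem LipFamily.differentiableOn {g : I → ℝ → U → E} (hg : LipFamily O a g) (i : I) (θ : ℝ) :
    DifferentiableOn ℂ (g i θ) O :=
  (hg.contDiffOn i θ).differentiableOn (by simp)

theorem LipFamily.fderiv {g : I → ℝ → U → E} (hr : 0 < r) (hO : thickening r O' ⊆ O)
    (hg : LipFamily O a g) : LipFamily O' a (fun i θ u ↦ fderiv ℂ (g i θ) u) where
  contDiffOn i θ u hu := (((hg.contDiffOn i θ).contDiffAt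
    (mem_nhds_of_thickening_subset hr hO hu)).fderiv_right (by simp)).contDiffWithinAt
  weight_nonneg := hg.weight_nonneg
  bound := by
    obtain ⟨C, hC, hb⟩ := hg.bound
    refine ⟨2 * C / r, by positivity, fun i θ u hu ↦ ?_⟩
    calc ‖_root_.fderiv ℂ (g i θ) u‖ ≤ 2 * (C * a i) / r :=
          norm_fderiv_le_of_norm_le hr hO (hg.differentiableOn i θ) (hb i θ) hu
      _ = 2 * C / r * a i := by ring
  lipschitz := by
    obtain ⟨C, hC, hl⟩ := hg.lipschitz
    refine ⟨2 * C / r, by positivity, fun i θ τ u hu ↦ ?_⟩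
    have hu' := mem_nhds_of_thickening_subset hr hO hu
    rw [← fderiv_sub (hg.differentiableAt i θ hu') (hg.differentiableAt i τ hu')]
    calc ‖_root_.fderiv ℂ (g i θ - g i τ) u‖ ≤ 2 * (C * a i * |θ - τ|) / r :=
          norm_fderiv_le_of_norm_le hr hO ((hg.differentiableOn i θ).sub (hg.differentiableOn i τ))
            (hl i θ τ) hu
      _ = 2 * C / r * a i * |θ - τ| := by ring

theorem LipFamily.hasDerivAt_fderiv {g g' : I → ℝ → U → E} (hr : 0 < r)
    (hO : thickening r O' ⊆ O) (hg : LipFamily O a g) (hg' : LipFamily O a g')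
    (hd : ∀ i θ, ∀ u ∈ O, HasDerivAt (fun τ ↦ g i τ u) (g' i θ u) θ) (i : I) (θ : ℝ) {u : U}
    (hu : u ∈ O') :
    HasDerivAt (fun τ ↦ _root_.fderiv ℂ (g i τ) u) (_root_.fderiv ℂ (g' i θ) u) θ := by
  obtain ⟨C, -, hexp⟩ := exists_norm_sub_sub_smul_le hd hg'
  refine hasDerivAt_of_norm_sub_le_sq (C := 2 * (C * a i) / r) fun τ ↦ ?_
  have hu' := mem_nhds_of_thickening_subset hr hO hu
  have hgτ := hg.differentiableAt i τ hu'
  have hgθ := hg.differentiableAt i θ hu'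
  have hgθ' := hg'.differentiableAt i θ hu'
  rw [← fderiv_sub hgτ hgθ, ← fderiv_const_smul hgθ',
    ← fderiv_sub (hgτ.sub hgθ) (hgθ'.const_smul (τ - θ))]
  calc ‖_root_.fderiv ℂ (g i τ - g i θ - (τ - θ) • g' i θ) u‖
      ≤ 2 * (C * a i * |τ - θ| ^ 2) / r :=
        norm_fderiv_le_of_norm_le hr hO (((hg.differentiableOn i τ).sub
          (hg.differentiableOn i θ)).sub ((hg'.differentiableOn i θ).const_smul (τ - θ)))
          (hexp i θ τ) hu
    _ = 2 * (C * a i) / r * |τ - θ| ^ 2 := by ring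

theorem SmoothFamily.fderiv {g : I → ℝ → U → E} (hr : 0 < r) (hO : thickening r O' ⊆ O)
    (hg : SmoothFamily q O a g) : SmoothFamily q O' a (fun i θ u ↦ fderiv ℂ (g i θ) u) := by
  induction q generalizing g with
  | zero => exact LipFamily.fderiv hr hO hg
  | succ q ih =>
    obtain ⟨hg₀, g', hd, hg'⟩ := hg
    exact ⟨hg₀.fderiv hr hO, _,
      fun i θ u hu ↦ hg₀.hasDerivAt_fderiv hr hO hg'.lipFamily hd i θ hu, ih hg'⟩

theorem SmoothFamily.fderiv_sub {g h : I → ℝ → U → E} (hr : 0 < r) (hO : thickening r O' ⊆ O)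
    (hg : LipFamily O b g) (hh : LipFamily O b h)
    (hdiff : SmoothFamily q O a (fun i θ u ↦ g i θ u - h i θ u)) :
    SmoothFamily q O' a (fun i θ u ↦ _root_.fderiv ℂ (g i θ) u - _root_.fderiv ℂ (h i θ) u) :=
  (hdiff.fderiv hr hO).congr fun i θ _ hu ↦
    have hu' := mem_nhds_of_thickening_subset hr hO hu
    (_root_.fderiv_sub (hg.differentiableAt i θ hu') (hh.differentiableAt i θ hu')).symm

end Families

section Composition

theorem LipFamily.comp {f : I → ℝ → F → E} {Φ : I → ℝ → U → F} {W : Set F} (hs : 0 < s)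
    (hf : LipFamily (thickening s W) a f) (hΦ : LipFamily O 1 Φ)
    (hΦW : ∀ i θ, MapsTo (Φ i θ) O W) : LipFamily O a (fun i θ u ↦ f i θ (Φ i θ u)) := by
  have hΦW' : ∀ i θ, MapsTo (Φ i θ) O (thickening s W) := fun i θ u hu ↦
    self_subset_thickening hs W (hΦW i θ hu)
  obtain ⟨C, hC, hbf⟩ := hf.bound
  refine ⟨fun i θ ↦ (hf.contDiffOn i θ).comp (hΦ.contDiffOn i θ) (hΦW' i θ), hf.weight_nonneg,
    ⟨C, hC, fun i θ u hu ↦ hbf i θ _ (hΦW' i θ hu)⟩, ?_⟩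
  obtain ⟨L, hL, hlf⟩ := hf.lipschitz
  obtain ⟨D, hD, hlΦ⟩ := hΦ.lipschitz
  refine ⟨L + 2 * C / s * D, by positivity, fun i θ τ u hu ↦ ?_⟩
  have ha := hf.weight_nonneg i
  calc ‖f i θ (Φ i θ u) - f i τ (Φ i τ u)‖
      = ‖(f i θ (Φ i θ u) - f i τ (Φ i θ u)) + (f i τ (Φ i θ u) - f i τ (Φ i τ u))‖ := by
        rw [sub_add_sub_cancel]
    _ ≤ L * a i * |θ - τ| + 2 * (C * a i) / s * ‖Φ i θ u - Φ i τ u‖ :=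
        norm_add_le_of_le (hlf i θ τ _ (hΦW' i θ hu)) (norm_sub_le_of_norm_le_of_thickening hs
          (hf.differentiableOn i τ) (hbf i τ) (hΦW i τ hu) (hΦW' i θ hu))
    _ ≤ L * a i * |θ - τ| + 2 * (C * a i) / s * (D * 1 * |θ - τ|) := by
        gcongr
        exact hlΦ i θ τ u hu
    _ = (L + 2 * C / s * D) * a i * |θ - τ| := by ring

theorem LipFamily.hasDerivAt_comp {f f' : I → ℝ → U → E} (hf : LipFamily O a f)
    (hf' : LipFamily O a f') (hd : ∀ i θ, ∀ u ∈ O, HasDerivAt (fun τ ↦ f i τ u) (f' i θ u) θ)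
    {φ : ℝ → U} {v : U} (i : I) {θ : ℝ} (hφ : HasDerivAt φ v θ) (hφO : ∀ τ, φ τ ∈ O)
    (hO : O ∈ 𝓝 (φ θ)) :
    HasDerivAt (fun τ ↦ f i τ (φ τ)) (f' i θ (φ θ) + _root_.fderiv ℂ (f i θ) (φ θ) v) θ := by
  have hremainder : HasDerivAt
      (fun τ ↦ f i τ (φ τ) - f i θ (φ τ) - (τ - θ) • f' i θ (φ τ)) 0 θ := by
    obtain ⟨C, -, hexp⟩ := exists_norm_sub_sub_smul_le hd hf'
    exact hasDerivAt_of_norm_sub_le_sq (C := C * a i) fun τ ↦ by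
      simpa using hexp i θ τ _ (hφO τ)
  have hspace : HasDerivAt (fun τ ↦ f i θ (φ τ)) (_root_.fderiv ℂ (f i θ) (φ θ) v) θ :=
    ((hf.differentiableAt i θ hO).hasFDerivAt.restrictScalars ℝ).comp_hasDerivAt θ hφ
  have hspace' : HasDerivAt (fun τ ↦ f' i θ (φ τ)) (_root_.fderiv ℂ (f' i θ) (φ θ) v) θ :=
    ((hf'.differentiableAt i θ hO).hasFDerivAt.restrictScalars ℝ).comp_hasDerivAt θ hφ
  have htime : HasDerivAt (fun τ ↦ (τ - θ) • f' i θ (φ τ)) (f' i θ (φ θ)) θ := by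
    simpa using ((hasDerivAt_id' θ).sub_const θ).fun_smul hspace'
  simpa [add_comm] using (hremainder.fun_add htime).fun_add hspace

theorem SmoothFamily.comp {f : I → ℝ → F → E} {Φ : I → ℝ → U → F} {W : Set F} (hs : 0 < s)
    (hf : SmoothFamily q (thickening s W) a f) (hΦ : SmoothFamily q O 1 Φ)
    (hΦW : ∀ i θ, MapsTo (Φ i θ) O W) : SmoothFamily q O a (fun i θ u ↦ f i θ (Φ i θ u)) := by
  induction q generalizing E s with
  | zero => exact LipFamily.comp hs hf hΦ hΦW
  | succ q ih =>
    have hfq := hf.of_succ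
    have hΦq := hΦ.of_succ
    obtain ⟨hf₀, f', hdf, hf'⟩ := hf
    obtain ⟨hΦ₀, Φ', hdΦ, hΦ'⟩ := hΦ
    have hDf : SmoothFamily q O a (fun i θ u ↦ _root_.fderiv ℂ (f i θ) (Φ i θ u)) :=
      ih (half_pos hs) (hfq.fderiv (half_pos hs) (thickening_half_thickening_subset s W)) hΦq
    have hDfΦ' := hDf.clm_apply hΦ'
    rw [mul_one] at hDfΦ'
    exact ⟨hf₀.comp hs hΦ₀ hΦW, _, fun i θ u hu ↦ hf₀.hasDerivAt_comp hf'.lipFamily hdf i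
      (hdΦ i θ u hu) (fun τ ↦ self_subset_thickening hs W (hΦW i τ hu))
      (mem_nhds_of_thickening_subset hs subset_rfl (hΦW i θ hu)), (ih hs hf' hΦq).add hDfΦ'⟩

theorem LipFamily.lineMap {Φ Ψ : I → ℝ → U → E} (hΦ : LipFamily O a Φ) (hΨ : LipFamily O a Ψ) :
    LipFamily O (a ∘ Prod.fst) (fun (j : I × unitInterval) θ u ↦
      AffineMap.lineMap (Ψ j.1 θ u) (Φ j.1 θ u) (j.2 : ℝ)) := by
  have hdiff : LipFamily O a (fun i θ u ↦ Φ i θ u - Ψ i θ u) := SmoothFamily.sub (q := 0) hΦ hΨ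
  have hsmul := (SmoothFamily.const_smul (q := 0) (c := fun j : I × unitInterval ↦ (j.2 : ℝ))
    (fun j ↦ j.2.2.1) (hdiff.comp_index Prod.fst)).of_le_mul (L := 1)
    (fun j ↦ hΦ.weight_nonneg j.1) zero_le_one (fun j ↦
      mul_le_mul_of_nonneg_right j.2.2.2 (hΦ.weight_nonneg j.1))
  refine (LipFamily.add hsmul (hΨ.comp_index Prod.fst)).congr fun j θ u _ ↦ ?_
  simp [AffineMap.lineMap_apply]

theorem norm_sub_le_of_hasDerivAt_unitInterval {V : Type*} [NormedAddCommGroup V] [NormedSpace ℝ V]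
    {f : ℝ → V} {f' : unitInterval → V} {C : ℝ}
    (hd : ∀ t : unitInterval, HasDerivAt f (f' t) t) (hC : ∀ t, ‖f' t‖ ≤ C) :
    ‖f 1 - f 0‖ ≤ C := by
  refine norm_image_sub_le_of_norm_deriv_le_segment_01'
    (f' := fun t ↦ f' (projIcc 0 1 zero_le_one t)) (fun t ht ↦ ?_) fun t _ ↦ hC _
  simpa only [projIcc_of_mem zero_le_one ht] using (hd ⟨t, ht⟩).hasDerivWithinAt

theorem LipFamily.of_hasDerivAt_unitInterval {P : I → ℝ → U → ℝ → E}
    {P' : I × unitInterval → ℝ → U → E}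
    (hP : ∀ i θ, ContDiffOn ℂ ∞ (fun u ↦ P i θ u 1 - P i θ u 0) O)
    (hd : ∀ i θ, ∀ u ∈ O, ∀ t : unitInterval, HasDerivAt (P i θ u) (P' (i, t) θ u) t)
    (hP' : LipFamily O (a ∘ Prod.fst) P') :
    LipFamily O a (fun i θ u ↦ P i θ u 1 - P i θ u 0) where
  contDiffOn := hP
  weight_nonneg i := hP'.weight_nonneg (i, 0)
  bound := by
    obtain ⟨C, hC, hb⟩ := hP'.bound
    exact ⟨C, hC, fun i θ u hu ↦
      norm_sub_le_of_hasDerivAt_unitInterval (hd i θ u hu) fun t ↦ hb (i, t) θ u hu⟩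
  lipschitz := by
    obtain ⟨C, hC, hl⟩ := hP'.lipschitz
    refine ⟨C, hC, fun i θ τ u hu ↦ ?_⟩
    rw [sub_sub_sub_comm]
    exact norm_sub_le_of_hasDerivAt_unitInterval
      (fun t ↦ (hd i θ u hu t).sub (hd i τ u hu t)) fun t ↦ hl (i, t) θ τ u hu

theorem LipFamily.comp_sub_comp {f : I → ℝ → F → E} {Φ Ψ : I → ℝ → U → F} {W : Set F}
    (hs : 0 < s) (hf : LipFamily (thickening s W) 1 f) (hΦ : LipFamily O 1 Φ)
    (hΨ : LipFamily O 1 Ψ) (hdiff : LipFamily O a (fun i θ u ↦ Φ i θ u - Ψ i θ u))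
    (hW : ∀ i θ, ∀ u ∈ O, segment ℝ (Ψ i θ u) (Φ i θ u) ⊆ W) :
    LipFamily O a (fun i θ u ↦ f i θ (Φ i θ u) - f i θ (Ψ i θ u)) := by
  have hsegment : ∀ i θ, ∀ u ∈ O, ∀ t : unitInterval,
      AffineMap.lineMap (Ψ i θ u) (Φ i θ u) (t : ℝ) ∈ W := fun i θ u hu t ↦
    hW i θ u hu (segment_eq_image_lineMap ℝ (Ψ i θ u) (Φ i θ u) ▸ mem_image_of_mem _ t.2)
  have hDf : LipFamily O 1 (fun (j : I × unitInterval) θ u ↦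
      _root_.fderiv ℂ (f j.1 θ) (AffineMap.lineMap (Ψ j.1 θ u) (Φ j.1 θ u) (j.2 : ℝ))) :=
    ((hf.fderiv (half_pos hs) (thickening_half_thickening_subset s W)).comp_index Prod.fst).comp
      (half_pos hs) (hΦ.lineMap hΨ) fun j θ u hu ↦ hsegment j.1 θ u hu j.2
  have hP' := SmoothFamily.clm_apply (q := 0) hDf (hdiff.comp_index Prod.fst)
  rw [one_mul] at hP'
  have hΨW : ∀ i θ, MapsTo (Ψ i θ) O (thickening s W) := fun i θ u hu ↦
    self_subset_thickening hs W (hW i θ u hu (left_mem_segment ℝ _ _))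
  have hΦW : ∀ i θ, MapsTo (Φ i θ) O (thickening s W) := fun i θ u hu ↦
    self_subset_thickening hs W (hW i θ u hu (right_mem_segment ℝ _ _))
  have hd : ∀ i θ, ∀ u ∈ O, ∀ t : unitInterval,
      HasDerivAt (fun x : ℝ ↦ f i θ (AffineMap.lineMap (Ψ i θ u) (Φ i θ u) x))
        (_root_.fderiv ℂ (f i θ) (AffineMap.lineMap (Ψ i θ u) (Φ i θ u) (t : ℝ))
          (Φ i θ u - Ψ i θ u)) (t : ℝ) := fun i θ u hu t ↦
    ((hf.differentiableAt i θ (mem_nhds_of_thickening_subset hs subset_rfl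
      (hsegment i θ u hu t))).hasFDerivAt.restrictScalars ℝ).comp_hasDerivAt (t : ℝ)
        AffineMap.hasDerivAt_lineMap
  refine (LipFamily.of_hasDerivAt_unitInterval (fun i θ ↦ ?_) hd hP').congr (by simp)
  simpa using ((hf.contDiffOn i θ).comp (hΦ.contDiffOn i θ) (hΦW i θ)).sub
    ((hf.contDiffOn i θ).comp (hΨ.contDiffOn i θ) (hΨW i θ))

theorem SmoothFamily.comp_sub_comp {f : I → ℝ → F → E} {Φ Ψ : I → ℝ → U → F} {W : Set F}
    (hs : 0 < s) (hf : SmoothFamily q (thickening s W) 1 f) (hΦ : SmoothFamily q O 1 Φ)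
    (hΨ : SmoothFamily q O 1 Ψ) (hdiff : SmoothFamily q O a (fun i θ u ↦ Φ i θ u - Ψ i θ u))
    (hW : ∀ i θ, ∀ u ∈ O, segment ℝ (Ψ i θ u) (Φ i θ u) ⊆ W) :
    SmoothFamily q O a (fun i θ u ↦ f i θ (Φ i θ u) - f i θ (Ψ i θ u)) := by
  induction q generalizing E s with
  | zero => exact LipFamily.comp_sub_comp hs hf hΦ hΨ hdiff hW
  | succ q ih =>
    have hΨW : ∀ i θ, MapsTo (Ψ i θ) O W := fun i θ u hu ↦
      hW i θ u hu (left_mem_segment ℝ _ _)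
    have hΦW : ∀ i θ, MapsTo (Φ i θ) O W := fun i θ u hu ↦
      hW i θ u hu (right_mem_segment ℝ _ _)
    have hDf := hf.of_succ.fderiv (half_pos hs) (thickening_half_thickening_subset s W)
    have hΦq := hΦ.of_succ
    have hΨq := hΨ.of_succ
    have hdiffq := hdiff.of_succ
    obtain ⟨hf₀, f', hdf, hf'⟩ := hf
    obtain ⟨hΦ₀, Φ', hdΦ, hΦ'⟩ := hΦ
    obtain ⟨hΨ₀, Ψ', hdΨ, _⟩ := hΨ
    obtain ⟨hdiff₀, D', hdD, hD'⟩ := hdiff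
    have hdiff' : SmoothFamily q O a (fun i θ u ↦ Φ' i θ u - Ψ' i θ u) :=
      hD'.congr fun i θ u hu ↦ ((hdΦ i θ u hu).sub (hdΨ i θ u hu)).unique (hdD i θ u hu)
    have hDfdiff := (ih (half_pos hs) hDf hΦq hΨq hdiffq).clm_apply hΦ'
    have hDfΨ := (hDf.comp (half_pos hs) hΨq hΨW).clm_apply hdiff'
    rw [mul_one] at hDfdiff
    rw [one_mul] at hDfΨ
    have hderiv : ∀ (Θ Θ' : I → ℝ → U → F), (∀ i θ, MapsTo (Θ i θ) O W) →
        (∀ i θ, ∀ u ∈ O, HasDerivAt (fun τ ↦ Θ i τ u) (Θ' i θ u) θ) → ∀ i θ, ∀ u ∈ O,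
        HasDerivAt (fun τ ↦ f i τ (Θ i τ u))
          (f' i θ (Θ i θ u) + _root_.fderiv ℂ (f i θ) (Θ i θ u) (Θ' i θ u)) θ :=
      fun Θ Θ' hΘW hdΘ i θ u hu ↦ hf₀.hasDerivAt_comp hf'.lipFamily hdf i (hdΘ i θ u hu)
        (fun τ ↦ self_subset_thickening hs W (hΘW i τ hu))
        (mem_nhds_of_thickening_subset hs subset_rfl (hΘW i θ hu))
    refine ⟨hf₀.comp_sub_comp hs hΦ₀ hΨ₀ hdiff₀ hW, _, fun i θ u hu ↦ ?_,
      (ih hs hf' hΦq hΨq hdiffq).add (hDfdiff.add hDfΨ)⟩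
    refine ((hderiv Φ Φ' hΦW hdΦ i θ u hu).sub
      (hderiv Ψ Ψ' hΨW hdΨ i θ u hu)).congr_deriv ?_
    simp only [map_sub, sub_apply]
    abel

end Composition

section Inverse

variable [CompleteSpace E]

theorem isUnit_of_norm_sub_one_le_half {𝔸 : Type*} [NormedRing 𝔸] [HasSummableGeomSeries 𝔸] {A : 𝔸}
    (hA : ‖A - 1‖ ≤ 1 / 2) : IsUnit A := by
  simpa using isUnit_one_sub_of_norm_lt_one (x := 1 - A) (by rw [norm_sub_rev]; linarith)

theorem isInvertible_of_norm_sub_one_le_half {A : E →L[ℂ] E} (hA : ‖A - 1‖ ≤ 1 / 2) :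
    A.IsInvertible := by
  obtain ⟨x, rfl⟩ := isUnit_of_norm_sub_one_le_half hA
  exact ⟨ContinuousLinearEquiv.ofUnit x, rfl⟩

theorem norm_inverse_le_two {A : E →L[ℂ] E} (hA : ‖A - 1‖ ≤ 1 / 2) : ‖A.inverse‖ ≤ 2 := by
  rw [← ContinuousLinearMap.ringInverse_eq_inverse]
  have hinv : Ring.inverse A = 1 - (A - 1) * Ring.inverse A := by
    rw [sub_mul, Ring.mul_inverse_cancel _ (isUnit_of_norm_sub_one_le_half hA)]
    simp
  have : ‖Ring.inverse A‖ ≤ 1 + 1 / 2 * ‖Ring.inverse A‖ :=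
    calc ‖Ring.inverse A‖ = ‖1 - (A - 1) * Ring.inverse A‖ := by rw [← hinv]
      _ ≤ 1 + 1 / 2 * ‖Ring.inverse A‖ :=
        norm_sub_le_of_le ContinuousLinearMap.norm_id_le
          ((norm_mul_le _ _).trans (by gcongr))
  linarith

theorem hasFDerivAt_inverse {A : E →L[ℂ] E} (hA : IsUnit A) :
    HasFDerivAt (fun B : E →L[ℂ] E ↦ B.inverse)
      (-ContinuousLinearMap.mulLeftRight ℂ (E →L[ℂ] E) A.inverse A.inverse) A := by
  obtain ⟨x, rfl⟩ := hA
  have := hasFDerivAt_ringInverse (𝕜 := ℂ) x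
  rw [← Ring.inverse_unit] at this
  simpa only [ContinuousLinearMap.ringInverse_eq_inverse] using this

theorem LipFamily.inverse {A : I → ℝ → U → E →L[ℂ] E} (hA : LipFamily O 1 A)
    (hA₁ : ∀ i θ, ∀ u ∈ O, ‖A i θ u - 1‖ ≤ 1 / 2) :
    LipFamily O 1 (fun i θ u ↦ (A i θ u).inverse) where
  contDiffOn i θ u hu := by
    obtain ⟨x, hx⟩ := isUnit_of_norm_sub_one_le_half (hA₁ i θ u hu)
    have hinv := contDiffAt_ringInverse ℂ (n := ∞) x
    rw [hx, ContinuousLinearMap.ringInverse_eq_inverse] at hinv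
    exact hinv.comp_contDiffWithinAt u (hA.contDiffOn i θ u hu)
  weight_nonneg := hA.weight_nonneg
  bound := ⟨2, zero_le_two, fun i θ u hu ↦ by
    simpa using norm_inverse_le_two (hA₁ i θ u hu)⟩
  lipschitz := by
    obtain ⟨C, hC, hl⟩ := hA.lipschitz
    refine ⟨2 * C * 2, by positivity, fun i θ τ u hu ↦ ?_⟩
    have hsub := Ring.inverse_sub_inverse (iff_of_true
      (isUnit_of_norm_sub_one_le_half (hA₁ i θ u hu))
      (isUnit_of_norm_sub_one_le_half (hA₁ i τ u hu)))
    simp only [ContinuousLinearMap.ringInverse_eq_inverse] at hsub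
    rw [hsub, abs_sub_comm]
    calc ‖(A i θ u).inverse * (A i τ u - A i θ u) * (A i τ u).inverse‖
        ≤ 2 * (C * 1 * |τ - θ|) * 2 := norm_mul_le_of_le (norm_mul_le_of_le
          (norm_inverse_le_two (hA₁ i θ u hu)) (hl i τ θ u hu))
          (norm_inverse_le_two (hA₁ i τ u hu))
      _ = 2 * C * 2 * 1 * |τ - θ| := by ring

theorem SmoothFamily.inverse {A : I → ℝ → U → E →L[ℂ] E} (hA : SmoothFamily q O 1 A)
    (hA₁ : ∀ i θ, ∀ u ∈ O, ‖A i θ u - 1‖ ≤ 1 / 2) :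
    SmoothFamily q O 1 (fun i θ u ↦ (A i θ u).inverse) := by
  induction q generalizing A with
  | zero => exact LipFamily.inverse hA hA₁
  | succ q ih =>
    have hinv := ih hA.of_succ hA₁
    obtain ⟨hA₀, A', hd, hA'⟩ := hA
    let mul := ContinuousLinearMap.mul ℂ (E →L[ℂ] E)
    have hinv' := (SmoothFamily.bilin mul (SmoothFamily.bilin mul hinv hA') hinv).neg
    simp only [one_mul] at hinv'
    refine ⟨hA₀.inverse hA₁, _, fun i θ u hu ↦ ?_, hinv'⟩
    exact ((hasFDerivAt_inverse
      (isUnit_of_norm_sub_one_le_half (hA₁ i θ u hu))).restrictScalars ℝ).comp_hasDerivAt θ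
        (hd i θ u hu)

end Inverse

section Integral

theorem LipFamily.hasFDerivAt_integral {g : I → ℝ → U → E} (hO : IsOpen O)
    (hg : LipFamily O a g) (i : I) (θ₁ θ₂ : ℝ) {u : U} (hu : u ∈ O) :
    HasFDerivAt (fun v ↦ ∫ θ in θ₁..θ₂, g i θ v)
      (∫ θ in θ₁..θ₂, _root_.fderiv ℂ (g i θ) u) u := by
  obtain ⟨r, hr, hball⟩ := isOpen_iff.1 hO u hu
  have hhalf : thickening (r / 2) (ball u (r / 2)) ⊆ O := by
    rw [← thickening_singleton] at hball ⊢
    exact (thickening_half_thickening_subset r {u}).trans hball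
  have hDg := hg.fderiv (half_pos hr) hhalf
  obtain ⟨C, -, hb⟩ := hDg.bound
  refine intervalIntegral.hasFDerivAt_integral_of_dominated_of_fderiv_le
    (𝕜 := ℂ) (F := fun v θ ↦ g i θ v) (F' := fun v θ ↦ _root_.fderiv ℂ (g i θ) v)
    (bound := fun _ ↦ C * a i) (ball_mem_nhds u (half_pos hr)) ?_
    ((hg.continuous i hu).intervalIntegrable _ _)
    (hDg.continuous i (mem_ball_self (half_pos hr))).aestronglyMeasurable
    (Eventually.of_forall fun θ _ v ↦ hb i θ v) (continuous_const.intervalIntegrable _ _)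
    (Eventually.of_forall fun θ _ v hv ↦ (hg.differentiableAt i θ
      (mem_nhds_of_thickening_subset (half_pos hr) hhalf hv)).hasFDerivAt)
  filter_upwards [hO.mem_nhds hu] with v hv
  exact (hg.continuous i hv).aestronglyMeasurable

theorem LipFamily.contDiffOn_integral {g : I → ℝ → U → E} (hO : IsOpen O)
    (hg : LipFamily O a g) (i : I) (θ₁ θ₂ : ℝ) :
    ContDiffOn ℂ ∞ (fun u ↦ ∫ θ in θ₁..θ₂, g i θ u) O := by
  rw [contDiffOn_infty]
  intro n
  induction n generalizing E O with
  | zero => exact contDiffOn_zero.2 fun u hu ↦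
      (hg.hasFDerivAt_integral hO i θ₁ θ₂ hu).continuousAt.continuousWithinAt
  | succ n ih =>
    rw [Nat.cast_add_one, contDiffOn_succ_iff_fderiv_of_isOpen hO]
    refine ⟨fun u hu ↦
      (hg.hasFDerivAt_integral hO i θ₁ θ₂ hu).differentiableAt.differentiableWithinAt,
      fun hω ↦ absurd hω (WithTop.natCast_ne_top n), ?_⟩
    refine ContDiffOn.congr (fun u hu ↦ ?_) fun u hu ↦
      (hg.hasFDerivAt_integral hO i θ₁ θ₂ hu).fderiv
    obtain ⟨r, hr, hball⟩ := isOpen_iff.1 hO u hu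
    have hDg := hg.fderiv (O' := ball u (r / 2)) (half_pos hr) (by
      rw [← thickening_singleton] at hball ⊢
      exact (thickening_half_thickening_subset r {u}).trans hball)
    exact ((ih isOpen_ball hDg).contDiffAt
      (ball_mem_nhds u (half_pos hr))).contDiffWithinAt

theorem norm_integral_zero_one_le {V : Type*} [NormedAddCommGroup V] [NormedSpace ℝ V]
    {φ : ℝ → V} {C : ℝ} (hC : ∀ θ, ‖φ θ‖ ≤ C) :
    ‖∫ θ in (0 : ℝ)..1, φ θ‖ ≤ C := by
  simpa using intervalIntegral.norm_integral_le_of_norm_le_const (a := (0 : ℝ)) (b := 1)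
    fun θ _ ↦ hC θ

theorem SmoothFamily.average {g : I → ℝ → U → E} {p : ℕ} (hO : IsOpen O)
    (hg : LipFamily O a g) : SmoothFamily p O a (fun i _ u ↦ ∫ θ in (0 : ℝ)..1, g i θ u) := by
  obtain ⟨C, hC, hb⟩ := hg.bound
  exact .of_const hg.weight_nonneg (fun i ↦ hg.contDiffOn_integral hO i 0 1)
    ⟨C, hC, fun i u hu ↦ norm_integral_zero_one_le fun θ ↦ hb i θ u hu⟩

theorem SmoothFamily.average_sub {g h : I → ℝ → U → E} {p : ℕ} (hO : IsOpen O)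
    (hg : LipFamily O b g) (hh : LipFamily O b h)
    (hdiff : LipFamily O a (fun i θ u ↦ g i θ u - h i θ u)) :
    SmoothFamily p O a
      (fun i _ u ↦ (∫ θ in (0 : ℝ)..1, g i θ u) - ∫ θ in (0 : ℝ)..1, h i θ u) :=
  (SmoothFamily.average hO hdiff).congr fun i _ _ hu ↦ (intervalIntegral.integral_sub
    ((hg.continuous i hu).intervalIntegrable _ _)
    ((hh.continuous i hu).intervalIntegrable _ _)).symm

theorem primitive_periodic {V : Type*} [NormedAddCommGroup V] [NormedSpace ℝ V]
    {φ : ℝ → V} (hc : Continuous φ) (hp : Function.Periodic φ 1)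
    (h0 : ∫ θ in (0 : ℝ)..1, φ θ = 0) :
    Function.Periodic (fun θ ↦ ∫ τ in (0 : ℝ)..θ, φ τ) 1 := fun θ ↦ by
  beta_reduce
  rw [← intervalIntegral.integral_add_adjacent_intervals (hc.intervalIntegrable 0 θ)
    (hc.intervalIntegrable θ (θ + 1)), hp.intervalIntegral_add_eq θ 0, zero_add, h0, add_zero]

theorem norm_primitive_le {V : Type*} [NormedAddCommGroup V] [NormedSpace ℝ V]
    {φ : ℝ → V} {B : ℝ} (hc : Continuous φ) (hp : Function.Periodic φ 1)
    (h0 : ∫ θ in (0 : ℝ)..1, φ θ = 0) (hb : ∀ θ, ‖φ θ‖ ≤ B) (θ : ℝ) :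
    ‖∫ τ in (0 : ℝ)..θ, φ τ‖ ≤ B / 2 := by
  have hround : ∫ τ in (0 : ℝ)..θ, φ τ = ∫ τ in (0 : ℝ)..(θ - round θ), φ τ := by
    simpa using ((primitive_periodic hc hp h0).sub_zsmul_eq (x := θ) (round θ)).symm
  rw [hround]
  calc ‖∫ τ in (0 : ℝ)..(θ - round θ), φ τ‖ ≤ B * |θ - round θ - 0| :=
        intervalIntegral.norm_integral_le_of_norm_le_const fun τ _ ↦ hb τ
    _ ≤ B * (1 / 2) := by
        rw [sub_zero]
        gcongr
        exacts [(norm_nonneg _).trans (hb 0), abs_sub_round θ]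
    _ = B / 2 := by ring

theorem LipFamily.primitive {g : I → ℝ → U → E} (hO : IsOpen O)
    (hg : LipFamily O a g) (hp : ∀ i, ∀ u ∈ O, Function.Periodic (fun θ ↦ g i θ u) 1)
    (h0 : ∀ i, ∀ u ∈ O, ∫ θ in (0 : ℝ)..1, g i θ u = 0) :
    LipFamily O a (fun i θ u ↦ ∫ τ in (0 : ℝ)..θ, g i τ u) := by
  obtain ⟨C, hC, hb⟩ := hg.bound
  refine ⟨fun i θ ↦ hg.contDiffOn_integral hO i 0 θ, hg.weight_nonneg,
    ⟨C / 2, by positivity, fun i θ u hu ↦ ?_⟩, ⟨C, hC, fun i θ τ u hu ↦ ?_⟩⟩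
  · rw [div_mul_eq_mul_div]
    exact norm_primitive_le (hg.continuous i hu) (hp i u hu) (h0 i u hu)
      (fun θ ↦ hb i θ u hu) θ
  · rw [intervalIntegral.integral_interval_sub_left
      ((hg.continuous i hu).intervalIntegrable _ _) ((hg.continuous i hu).intervalIntegrable _ _)]
    exact intervalIntegral.norm_integral_le_of_norm_le_const fun s _ ↦ hb i s u hu

theorem SmoothFamily.primitive [CompleteSpace E] {g : I → ℝ → U → E} (hO : IsOpen O)
    (hg : SmoothFamily q O a g) (hp : ∀ i, ∀ u ∈ O, Function.Periodic (fun θ ↦ g i θ u) 1)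
    (h0 : ∀ i, ∀ u ∈ O, ∫ θ in (0 : ℝ)..1, g i θ u = 0) :
    SmoothFamily q O a (fun i θ u ↦ ∫ τ in (0 : ℝ)..θ, g i τ u) := by
  cases q with
  | zero => exact LipFamily.primitive hO hg hp h0
  | succ q =>
    exact ⟨hg.lipFamily.primitive hO hp h0, g, fun i θ u hu ↦
      ((hg.lipFamily.continuous i hu).integral_hasStrictDerivAt 0 θ).hasDerivAt, hg.of_succ⟩

end Integral

section IteratedDerivatives

theorem SmoothFamily.iteratedFDeriv {g : I → ℝ → U → E} (hr : 0 < r)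
    (hO : thickening r O' ⊆ O) (hg : SmoothFamily q O a g) (k : ℕ) :
    SmoothFamily q O' a (fun i θ u ↦ iteratedFDeriv ℂ k (g i θ) u) := by
  induction k generalizing r O' with
  | zero =>
    have hcurry := (hg.mono ((self_subset_thickening hr O').trans hO)).clm
      (continuousMultilinearCurryFin0 ℂ U E).symm.toContinuousLinearEquiv.toContinuousLinearMap
    refine hcurry.congr fun i θ u _ ↦ ?_
    rw [iteratedFDeriv_zero_eq_comp]
    rfl
  | succ k ih =>
    have hD := (ih (half_pos hr) ((thickening_half_thickening_subset r O').trans hO)).fderiv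
      (half_pos hr) subset_rfl
    refine (hD.clm (continuousMultilinearCurryLeftEquiv ℂ (fun _ : Fin (k + 1) ↦ U)
      E).symm.toContinuousLinearEquiv.toContinuousLinearMap).congr fun i θ u _ ↦ ?_
    rw [iteratedFDeriv_succ_eq_comp_left]
    rfl

theorem SmoothFamily.exists_norm_iteratedDeriv_le {g : I → ℝ → U → E}
    (hg : SmoothFamily q O a g) {ν : ℕ} (hν : ν ≤ q + 1) :
    ∃ C, 0 ≤ C ∧ ∀ i θ, ∀ u ∈ O, ‖iteratedDeriv ν (fun τ ↦ g i τ u) θ‖ ≤ C * a i := by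
  induction ν generalizing q g with
  | zero => simpa only [iteratedDeriv_zero] using hg.lipFamily.bound
  | succ ν ih =>
    cases q with
    | zero =>
      obtain rfl : ν = 0 := by lia
      obtain ⟨C, hC, hl⟩ := hg.lipschitz
      refine ⟨C, hC, fun i θ u hu ↦ ?_⟩
      rw [zero_add, iteratedDeriv_one]
      exact norm_deriv_le_of_lip' (mul_nonneg hC (hg.weight_nonneg i))
        (Eventually.of_forall fun τ ↦ hl i τ θ u hu)
    | succ q =>
      obtain ⟨-, g', hd, hg'⟩ := hg
      obtain ⟨C, hC, hb⟩ := ih hg' (by lia)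
      refine ⟨C, hC, fun i θ u hu ↦ ?_⟩
      rw [iteratedDeriv_succ', funext fun τ ↦ (hd i τ u hu).deriv]
      exact hb i θ u hu

theorem iteratedDeriv_comp_mul_left {V : Type*} [NormedAddCommGroup V] [NormedSpace ℝ V]
    (φ : ℝ → V) (c : ℝ) (ν : ℕ) :
    iteratedDeriv ν (fun s ↦ φ (c * s)) = fun t ↦ c ^ ν • iteratedDeriv ν φ (c * t) := by
  induction ν with
  | zero => simp
  | succ ν ih =>
    ext t
    have hconst := deriv_const_smul_field (c ^ ν) (f := fun t ↦ iteratedDeriv ν φ (c * t)) (x := t)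
    simp only [Pi.smul_def] at hconst
    rw [iteratedDeriv_succ, ih, hconst, deriv_comp_mul_left c (iteratedDeriv ν φ) t,
      iteratedDeriv_succ, smul_smul, pow_succ]

end IteratedDerivatives

section NearIdentity

/-- Vector fields `f θ u` which are `1`-periodic and of class `C^{q,1}` in `θ`, smooth in `u ∈ O`
and bounded by `M`. -/
structure PeriodicField (q : ℕ) (O : Set E) (M : ℝ) (f : ℝ → E → E) : Prop where
  smooth : SmoothFamily q O 1 (fun _ : Unit ↦ f)
  norm_le : ∀ θ, ∀ u ∈ O, ‖f θ u‖ ≤ M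
  periodic : ∀ u ∈ O, Function.Periodic (fun θ ↦ f θ u) 1

/-- Families of `1`-periodic changes of variables of class `C^{q,1}` in `θ`, smooth in `u ∈ O`,
that move points by at most `r / 4`: by Cauchy's estimate their `u`-derivatives are within `1 / 2`
of the identity at distance `r` from the boundary of `O`. -/
structure NearIdentity (q : ℕ) (O : Set E) (r : ℝ) (φ : I → ℝ → E → E) : Prop where
  smooth : SmoothFamily q O 1 φ
  norm_sub_le : ∀ i θ, ∀ u ∈ O, ‖φ i θ u - u‖ ≤ r / 4
  periodic : ∀ i, ∀ u ∈ O, Function.Periodic (fun θ ↦ φ i θ u) 1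

/-- The integrand `f_θ(φ_θ(u)) − ∂_uφ_θ(u) F(u)` of the stroboscopic averaging iteration, `F` being
the averaged vector field of `φ`. -/
noncomputable def increment (f φ : ℝ → E → E) (θ : ℝ) (u : E) : E :=
  f θ (φ θ u) - fderiv ℂ (φ θ) u (aveField f φ u)

variable {O O' : Set E} {f : ℝ → E → E} {M : ℝ} {φ ψ : I → ℝ → E → E}

theorem PeriodicField.mono (hf : PeriodicField q O M f) (hO : O' ⊆ O) :
    PeriodicField q O' M f where
  smooth := hf.smooth.mono hO
  norm_le θ u hu := hf.norm_le θ u (hO hu)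
  periodic u hu := hf.periodic u (hO hu)

theorem NearIdentity.mono (hφ : NearIdentity q O r φ) (hO : O' ⊆ O) :
    NearIdentity q O' r φ where
  smooth := hφ.smooth.mono hO
  norm_sub_le i θ u hu := hφ.norm_sub_le i θ u (hO hu)
  periodic i u hu := hφ.periodic i u (hO hu)

theorem norm_fderiv_sub_one_le_half {g : E → E} (hr : 0 < r) (hO : thickening r O' ⊆ O)
    (hg : DifferentiableOn ℂ g O) (hn : ∀ z ∈ O, ‖g z - z‖ ≤ r / 4) {u : E} (hu : u ∈ O') :
    ‖fderiv ℂ g u - 1‖ ≤ 1 / 2 := by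
  have hderiv : fderiv ℂ (fun z ↦ g z - z) u = fderiv ℂ g u - 1 :=
    ((hg.differentiableAt (mem_nhds_of_thickening_subset hr hO hu)).hasFDerivAt.sub
      (hasFDerivAt_id u)).fderiv
  calc ‖fderiv ℂ g u - 1‖ ≤ 2 * (r / 4) / r := by
        rw [← hderiv]
        exact norm_fderiv_le_of_norm_le hr hO (hg.sub differentiableOn_id) hn hu
    _ = 1 / 2 := by field_simp; norm_num

theorem NearIdentity.norm_fderiv_sub_one_le (hφ : NearIdentity q O r φ) (hr : 0 < r)
    (hO : thickening r O' ⊆ O) (i : I) (θ : ℝ) {u : E} (hu : u ∈ O') :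
    ‖fderiv ℂ (φ i θ) u - 1‖ ≤ 1 / 2 :=
  norm_fderiv_sub_one_le_half hr hO (hφ.smooth.lipFamily.differentiableOn i θ)
    (hφ.norm_sub_le i θ) hu

theorem NearIdentity.mem_ball (hφ : NearIdentity q O r φ) (hr : 0 < r) (i : I) (θ : ℝ) {u : E}
    (hu : u ∈ O) : φ i θ u ∈ ball u (r / 2) := by
  rw [Metric.mem_ball, dist_eq_norm]
  exact (hφ.norm_sub_le i θ u hu).trans_lt (by linarith)

theorem NearIdentity.mapsTo_thickening (hφ : NearIdentity q O r φ) (hr : 0 < r) (hO : O' ⊆ O)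
    (i : I) (θ : ℝ) : MapsTo (φ i θ) O' (thickening (r / 2) O') := fun _ hu ↦
  ball_subset_thickening hu _ (hφ.mem_ball hr i θ (hO hu))

theorem NearIdentity.segment_subset (hφ : NearIdentity q O r φ) (hψ : NearIdentity q O r ψ)
    (hr : 0 < r) (hO : O' ⊆ O) (i : I) (θ : ℝ) {u : E} (hu : u ∈ O') :
    segment ℝ (φ i θ u) (ψ i θ u) ⊆ thickening (r / 2) O' :=
  ((convex_ball u (r / 2)).segment_subset (hφ.mem_ball hr i θ (hO hu))
    (hψ.mem_ball hr i θ (hO hu))).trans (ball_subset_thickening hu _)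

theorem PeriodicField.smooth_comp (hf : PeriodicField q O M f) (hφ : NearIdentity q O r φ)
    (hr : 0 < r) (hO' : thickening r O' ⊆ O) :
    SmoothFamily q O' 1 (fun i θ u ↦ f θ (φ i θ u)) := by
  have hsub : O' ⊆ O := (self_subset_thickening hr O').trans hO'
  exact SmoothFamily.comp (half_pos hr) ((hf.smooth.comp_index fun _ ↦ ()).mono
    ((thickening_half_thickening_subset r O').trans hO')) (hφ.smooth.mono hsub)
    (hφ.mapsTo_thickening hr hsub)

theorem PeriodicField.norm_comp_le (hf : PeriodicField q O M f) (hφ : NearIdentity q O r φ)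
    (hr : 0 < r) (hO' : thickening r O' ⊆ O) (i : I) (θ : ℝ) {u : E} (hu : u ∈ O') :
    ‖f θ (φ i θ u)‖ ≤ M :=
  hf.norm_le θ _ (hO' (thickening_mono (half_le_self hr.le) O'
    (hφ.mapsTo_thickening hr ((self_subset_thickening hr O').trans hO') i θ hu)))

theorem PeriodicField.periodic_increment (hf : PeriodicField q O M f)
    (hφ : NearIdentity q O r φ) (hO : IsOpen O) (hr : 0 < r) (hO' : thickening r O' ⊆ O) (i : I)
    {u : E} (hu : u ∈ O') : Function.Periodic (fun θ ↦ increment f (φ i) θ u) 1 := fun θ ↦ by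
  have hsub : O' ⊆ O := (self_subset_thickening hr O').trans hO'
  have hφu : φ i (θ + 1) u = φ i θ u := hφ.periodic i u (hsub hu) θ
  have hDφ : fderiv ℂ (φ i (θ + 1)) u = fderiv ℂ (φ i θ) u := by
    refine EventuallyEq.fderiv_eq ?_
    filter_upwards [hO.mem_nhds (hsub hu)] with v hv using hφ.periodic i v hv θ
  have hfφ : f (θ + 1) (φ i θ u) = f θ (φ i θ u) := hf.periodic _ (hO'
    (thickening_mono (half_le_self hr.le) O' (hφ.mapsTo_thickening hr hsub i θ hu))) θ
  simp only [increment, hφu, hDφ, hfφ]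

theorem PeriodicField.smooth_comp_sub_comp (hf : PeriodicField q O M f)
    (hφ : NearIdentity q O r φ) (hψ : NearIdentity q O r ψ) (hr : 0 < r)
    (hO' : thickening r O' ⊆ O)
    (hdiff : SmoothFamily q O a (fun i θ u ↦ ψ i θ u - φ i θ u)) :
    SmoothFamily q O' a (fun i θ u ↦ f θ (ψ i θ u) - f θ (φ i θ u)) := by
  have hsub : O' ⊆ O := (self_subset_thickening hr O').trans hO'
  exact SmoothFamily.comp_sub_comp (half_pos hr) ((hf.smooth.comp_index fun _ ↦ ()).mono
    ((thickening_half_thickening_subset r O').trans hO')) (hψ.smooth.mono hsub)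
    (hφ.smooth.mono hsub) (hdiff.mono hsub) fun i θ _ ↦ hφ.segment_subset hψ hr hsub i θ

theorem smoothFamily_id (hO : Bornology.IsBounded O) :
    SmoothFamily q O (1 : I → ℝ) (fun _ _ u ↦ u) := by
  obtain ⟨B, hB, hb⟩ := hO.exists_pos_norm_le
  exact .of_const (fun _ ↦ zero_le_one) (fun _ ↦ contDiffOn_id)
    ⟨B, hB.le, fun _ u hu ↦ by simpa using hb u hu⟩

theorem NearIdentity.fderiv_thAvg (hφ : NearIdentity q O r φ) (hO : IsOpen O) (i : I) {u : E}
    (hu : u ∈ O) : fderiv ℂ (thAvg (φ i)) u = ∫ θ in (0 : ℝ)..1, fderiv ℂ (φ i θ) u :=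
  (hφ.smooth.lipFamily.hasFDerivAt_integral hO i 0 1 hu).fderiv

variable [CompleteSpace E]

theorem NearIdentity.norm_thAvg_sub_le (hφ : NearIdentity q O r φ) (i : I) {u : E} (hu : u ∈ O) :
    ‖thAvg (φ i) u - u‖ ≤ r / 4 := by
  have heq : thAvg (φ i) u - u = ∫ θ in (0 : ℝ)..1, (φ i θ u - u) := by
    rw [intervalIntegral.integral_sub
      ((hφ.smooth.lipFamily.continuous i hu).intervalIntegrable _ _)
      (continuous_const.intervalIntegrable _ _)]
    simp [thAvg]
  rw [heq]
  exact norm_integral_zero_one_le fun θ ↦ hφ.norm_sub_le i θ u hu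

theorem NearIdentity.norm_fderiv_thAvg_sub_one_le (hφ : NearIdentity q O r φ) (hO : IsOpen O)
    (hr : 0 < r) (hO' : thickening r O' ⊆ O) (i : I) {u : E} (hu : u ∈ O') :
    ‖fderiv ℂ (thAvg (φ i)) u - 1‖ ≤ 1 / 2 :=
  norm_fderiv_sub_one_le_half hr hO' (fun _ hv ↦ (hφ.smooth.lipFamily.hasFDerivAt_integral hO i 0 1
    hv).differentiableAt.differentiableWithinAt) (fun _ ↦ hφ.norm_thAvg_sub_le i) hu

theorem NearIdentity.smooth_inverse_fderiv_thAvg {p : ℕ} (hφ : NearIdentity q O r φ)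
    (hO : IsOpen O) (hr : 0 < r) (hO' : thickening r O' ⊆ O) :
    SmoothFamily p O' 1 (fun i _ u ↦ (fderiv ℂ (thAvg (φ i)) u).inverse) :=
  (SmoothFamily.fderiv hr hO' (.average hO hφ.smooth.lipFamily)).inverse
    fun i _ _ hu ↦ hφ.norm_fderiv_thAvg_sub_one_le hO hr hO' i hu

theorem PeriodicField.smooth_aveField {p : ℕ} (hf : PeriodicField q O M f)
    (hφ : NearIdentity q O r φ) (hO : IsOpen O) (hO₁ : IsOpen O') (hr : 0 < r)
    (hO' : thickening r O' ⊆ O) : SmoothFamily p O' 1 (fun i _ u ↦ aveField f (φ i) u) := by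
  have h := (hφ.smooth_inverse_fderiv_thAvg hO hr hO').clm_apply
    (SmoothFamily.average (p := p) hO₁ (hf.smooth_comp hφ hr hO').lipFamily)
  rwa [one_mul] at h

theorem PeriodicField.norm_aveField_le (hf : PeriodicField q O M f) (hφ : NearIdentity q O r φ)
    (hO : IsOpen O) (hr : 0 < r) (hO' : thickening r O' ⊆ O) (i : I) {u : E} (hu : u ∈ O') :
    ‖aveField f (φ i) u‖ ≤ 2 * M :=
  ContinuousLinearMap.le_of_opNorm_le_of_le _
    (norm_inverse_le_two (hφ.norm_fderiv_thAvg_sub_one_le hO hr hO' i hu))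
    (norm_integral_zero_one_le fun θ ↦ hf.norm_comp_le hφ hr hO' i θ hu)

theorem PeriodicField.smooth_fderiv_aveField (hf : PeriodicField q O M f)
    (hφ : NearIdentity q O r φ) (hO : IsOpen O) (hO₁ : IsOpen O') (hr : 0 < r)
    (hO' : thickening r O' ⊆ O) :
    SmoothFamily q O' 1 (fun i θ u ↦ fderiv ℂ (φ i θ) u (aveField f (φ i) u)) := by
  simpa only [one_mul] using
    (hφ.smooth.fderiv hr hO').clm_apply (hf.smooth_aveField hφ hO hO₁ hr hO')

theorem PeriodicField.smooth_increment (hf : PeriodicField q O M f) (hφ : NearIdentity q O r φ)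
    (hO : IsOpen O) (hO₁ : IsOpen O') (hr : 0 < r) (hO' : thickening r O' ⊆ O) :
    SmoothFamily q O' 1 (fun i ↦ increment f (φ i)) :=
  (hf.smooth_comp hφ hr hO').sub (hf.smooth_fderiv_aveField hφ hO hO₁ hr hO')

theorem PeriodicField.norm_increment_le (hf : PeriodicField q O M f) (hφ : NearIdentity q O r φ)
    (hO : IsOpen O) (hr : 0 < r) (hO' : thickening r O' ⊆ O) (i : I) (θ : ℝ) {u : E}
    (hu : u ∈ O') : ‖increment f (φ i) θ u‖ ≤ 4 * M := by
  have hfderiv : ‖fderiv ℂ (φ i θ) u‖ ≤ 3 / 2 :=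
    calc ‖fderiv ℂ (φ i θ) u‖ = ‖fderiv ℂ (φ i θ) u - 1 + 1‖ := by rw [sub_add_cancel]
      _ ≤ 1 / 2 + 1 := norm_add_le_of_le (hφ.norm_fderiv_sub_one_le hr hO' i θ hu)
          ContinuousLinearMap.norm_id_le
      _ = 3 / 2 := by norm_num
  calc ‖increment f (φ i) θ u‖ ≤ M + 3 / 2 * (2 * M) :=
        norm_sub_le_of_le (hf.norm_comp_le hφ hr hO' i θ hu)
          (ContinuousLinearMap.le_of_opNorm_le_of_le _ hfderiv
            (hf.norm_aveField_le hφ hO hr hO' i hu))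
    _ = 4 * M := by ring

theorem PeriodicField.integral_increment (hf : PeriodicField q O M f)
    (hφ : NearIdentity q O r φ) (hO : IsOpen O) (hr : 0 < r) (hO' : thickening r O' ⊆ O) (i : I)
    {u : E} (hu : u ∈ O') : ∫ θ in (0 : ℝ)..1, increment f (φ i) θ u = 0 := by
  have hsub : O' ⊆ O := (self_subset_thickening hr O').trans hO'
  have hDφ := (hφ.smooth.fderiv hr hO').lipFamily.continuous i hu
  have hinv : (fderiv ℂ (thAvg (φ i)) u).IsInvertible :=
    isInvertible_of_norm_sub_one_le_half (hφ.norm_fderiv_thAvg_sub_one_le hO hr hO' i hu)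
  calc ∫ θ in (0 : ℝ)..1, increment f (φ i) θ u
      = (∫ θ in (0 : ℝ)..1, f θ (φ i θ u))
        - (∫ θ in (0 : ℝ)..1, fderiv ℂ (φ i θ) u) (aveField f (φ i) u) := by
        rw [ContinuousLinearMap.intervalIntegral_apply (hDφ.intervalIntegrable _ _)]
        exact intervalIntegral.integral_sub
          (((hf.smooth_comp hφ hr hO').lipFamily.continuous i hu).intervalIntegrable _ _)
          ((hDφ.clm_apply continuous_const).intervalIntegrable _ _)
    _ = thAvg (fun θ v ↦ f θ (φ i θ v)) u
        - fderiv ℂ (thAvg (φ i)) u ((fderiv ℂ (thAvg (φ i)) u).inverse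
          (thAvg (fun θ v ↦ f θ (φ i θ v)) u)) := by
        rw [← hφ.fderiv_thAvg hO i (hsub hu)]
        rfl
    _ = 0 := by rw [hinv.self_apply_inverse, sub_self]

theorem PeriodicField.nearIdentity_next {ε : I → ℝ} (hf : PeriodicField q O M f)
    (hφ : NearIdentity q O r φ) (hO : IsOpen O) (hO₁ : IsOpen O') (hr : 0 < r)
    (hO' : thickening r O' ⊆ O) (hB : Bornology.IsBounded O') (hM : 0 < M) (hε : ∀ i, 0 ≤ ε i)
    (hεr : ∀ i, 8 * M * ε i ≤ r) :
    NearIdentity q O' r (fun i θ u ↦ u + ε i • ∫ τ in (0 : ℝ)..θ, increment f (φ i) τ u) := by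
  have hinc := hf.smooth_increment hφ hO hO₁ hr hO'
  have hper := fun i u (hu : u ∈ O') ↦ hf.periodic_increment hφ hO hr hO' i hu
  have hmean := fun i u (hu : u ∈ O') ↦ hf.integral_increment hφ hO hr hO' i hu
  refine ⟨?_, fun i θ u hu ↦ ?_, fun i u hu θ ↦ ?_⟩
  · refine (smoothFamily_id hB).add (((hinc.primitive hO₁ hper hmean).const_smul hε).of_le_mul
      (L := r / (8 * M)) (fun _ ↦ zero_le_one) (by positivity) fun i ↦ ?_)
    simpa [le_div_iff₀' (by positivity : 0 < 8 * M)] using hεr i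
  · rw [add_sub_cancel_left, norm_smul, Real.norm_of_nonneg (hε i)]
    calc ε i * ‖∫ τ in (0 : ℝ)..θ, increment f (φ i) τ u‖ ≤ ε i * (4 * M / 2) :=
          mul_le_mul_of_nonneg_left (norm_primitive_le (hinc.lipFamily.continuous i hu)
            (hper i u hu) (hmean i u hu)
            (fun τ ↦ hf.norm_increment_le hφ hO hr hO' i τ hu) θ) (hε i)
      _ ≤ r / 4 := by linarith [hεr i]
  · exact congrArg (u + ε i • ·) (primitive_periodic (hinc.lipFamily.continuous i hu) (hper i u hu)
      (hmean i u hu) θ)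

theorem PeriodicField.smooth_aveField_sub_aveField {p : ℕ} (hf : PeriodicField q O M f)
    (hφ : NearIdentity q O r φ) (hψ : NearIdentity q O r ψ) (hO : IsOpen O) (hO₁ : IsOpen O')
    (hr : 0 < r) (hO' : thickening r O' ⊆ O)
    (hdiff : SmoothFamily q O a (fun i θ u ↦ ψ i θ u - φ i θ u)) :
    SmoothFamily p O' a (fun i _ u ↦ aveField f (ψ i) u - aveField f (φ i) u) := by
  have havg : SmoothFamily p O a (fun i _ u ↦ thAvg (ψ i) u - thAvg (φ i) u) :=
    .average_sub hO hψ.smooth.lipFamily hφ.smooth.lipFamily hdiff.lipFamily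
  have hDavg : SmoothFamily p O' a
      (fun i _ u ↦ fderiv ℂ (thAvg (ψ i)) u - fderiv ℂ (thAvg (φ i)) u) :=
    .fderiv_sub hr hO' (SmoothFamily.average (p := p) hO hψ.smooth.lipFamily).lipFamily
      (SmoothFamily.average (p := p) hO hφ.smooth.lipFamily).lipFamily havg
  have hfavg : SmoothFamily p O' a (fun i _ u ↦
      thAvg (fun θ v ↦ f θ (ψ i θ v)) u - thAvg (fun θ v ↦ f θ (φ i θ v)) u) :=
    .average_sub hO₁ (hf.smooth_comp hψ hr hO').lipFamily (hf.smooth_comp hφ hr hO').lipFamily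
      (hf.smooth_comp_sub_comp hφ hψ hr hO' hdiff).lipFamily
  have hDavg_aveField := hDavg.clm_apply (hf.smooth_aveField hφ hO hO₁ hr hO')
  rw [mul_one] at hDavg_aveField
  have h := (hψ.smooth_inverse_fderiv_thAvg hO hr hO').clm_apply (hfavg.sub hDavg_aveField)
  rw [one_mul] at h
  refine h.congr fun i _ u hu ↦ ?_
  have hinv : ∀ {χ : I → ℝ → E → E}, NearIdentity q O r χ →
      (fderiv ℂ (thAvg (χ i)) u).IsInvertible := fun hχ ↦
    isInvertible_of_norm_sub_one_le_half (hχ.norm_fderiv_thAvg_sub_one_le hO hr hO' i hu)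
  simp only [aveField, sub_apply, map_sub, (hinv hψ).inverse_apply_self,
    (hinv hφ).self_apply_inverse]
  abel

theorem PeriodicField.smooth_increment_sub_increment (hf : PeriodicField q O M f)
    (hφ : NearIdentity q O r φ) (hψ : NearIdentity q O r ψ) (hO : IsOpen O) (hO₁ : IsOpen O')
    (hr : 0 < r) (hO' : thickening r O' ⊆ O)
    (hdiff : SmoothFamily q O a (fun i θ u ↦ ψ i θ u - φ i θ u)) :
    SmoothFamily q O' a (fun i θ u ↦ increment f (ψ i) θ u - increment f (φ i) θ u) := by
  have hDdiff := (SmoothFamily.fderiv_sub hr hO' hψ.smooth.lipFamily hφ.smooth.lipFamily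
    hdiff).clm_apply (hf.smooth_aveField hψ hO hO₁ hr hO')
  have haveField := (hφ.smooth.fderiv hr hO').clm_apply
    (hf.smooth_aveField_sub_aveField hφ hψ hO hO₁ hr hO' hdiff)
  rw [mul_one] at hDdiff
  rw [one_mul] at haveField
  refine ((hf.smooth_comp_sub_comp hφ hψ hr hO' hdiff).sub (hDdiff.add haveField)).congr
    fun i θ u _ ↦ ?_
  simp only [increment, sub_apply, map_sub]
  abel

end NearIdentity

section Iteration

variable {D : ℕ → Set E} {f : ℝ → E → E} {M : ℝ} {ε : I → ℝ}

/-- The standing assumptions on the stroboscopic averaging iteration: nested bounded open domains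
`D k`, the `r`-neighbourhood of each contained in the preceding one, a periodic vector field on the
largest of them, and parameters `ε i` that are small with respect to the margin `r`. -/
structure AveragingScheme (q : ℕ) (D : ℕ → Set E) (r M : ℝ) (f : ℝ → E → E) (ε : I → ℝ) :
    Prop where
  isOpen : ∀ k, IsOpen (D k)
  thickening_subset : ∀ k, thickening r (D (k + 1)) ⊆ D k
  isBounded : Bornology.IsBounded (D 0)
  margin_pos : 0 < r
  periodicField : PeriodicField q (D 0) M f
  bound_pos : 0 < M
  param_pos : ∀ i, 0 < ε i
  param_le : ∀ i, 8 * M * ε i ≤ r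

namespace AveragingScheme

theorem antitone (h : AveragingScheme q D r M f ε) : Antitone D :=
  antitone_nat_of_succ_le fun k ↦
    (self_subset_thickening h.margin_pos _).trans (h.thickening_subset k)

theorem periodicField_domain (h : AveragingScheme q D r M f ε) (k : ℕ) :
    PeriodicField q (D k) M f :=
  h.periodicField.mono (h.antitone k.zero_le)

variable [CompleteSpace E]

theorem nearIdentity_phiIter (h : AveragingScheme q D r M f ε) (k : ℕ) :
    NearIdentity q (D k) r (fun i ↦ PhiIter f (ε i) k) := by
  induction k with
  | zero =>
    exact ⟨smoothFamily_id h.isBounded, fun i θ u _ ↦ by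
      simpa [PhiIter] using div_nonneg h.margin_pos.le zero_le_four,
      fun i u _ θ ↦ rfl⟩
  | succ k ih =>
    exact (h.periodicField_domain k).nearIdentity_next ih (h.isOpen k) (h.isOpen (k + 1))
      h.margin_pos (h.thickening_subset k) (h.isBounded.subset (h.antitone (k + 1).zero_le))
      h.bound_pos (fun i ↦ (h.param_pos i).le) h.param_le

theorem smooth_increment (h : AveragingScheme q D r M f ε) (k : ℕ) :
    SmoothFamily q (D (k + 1)) 1 (fun i ↦ increment f (PhiIter f (ε i) k)) :=
  (h.periodicField_domain k).smooth_increment (h.nearIdentity_phiIter k) (h.isOpen k)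
    (h.isOpen (k + 1)) h.margin_pos (h.thickening_subset k)

theorem periodic_increment (h : AveragingScheme q D r M f ε) (k : ℕ) (i : I) {u : E}
    (hu : u ∈ D (k + 1)) :
    Function.Periodic (fun θ ↦ increment f (PhiIter f (ε i) k) θ u) 1 :=
  (h.periodicField_domain k).periodic_increment (h.nearIdentity_phiIter k) (h.isOpen k)
    h.margin_pos (h.thickening_subset k) i hu

theorem integral_increment (h : AveragingScheme q D r M f ε) (k : ℕ) (i : I) {u : E}
    (hu : u ∈ D (k + 1)) : ∫ θ in (0 : ℝ)..1, increment f (PhiIter f (ε i) k) θ u = 0 :=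
  (h.periodicField_domain k).integral_increment (h.nearIdentity_phiIter k) (h.isOpen k)
    h.margin_pos (h.thickening_subset k) i hu

theorem smooth_increment_sub_increment {k : ℕ} (h : AveragingScheme q D r M f ε)
    (hdiff : SmoothFamily q (D (k + 1)) a
      (fun i θ u ↦ PhiIter f (ε i) (k + 1) θ u - PhiIter f (ε i) k θ u)) :
    SmoothFamily q (D (k + 2)) a (fun i θ u ↦
      increment f (PhiIter f (ε i) (k + 1)) θ u - increment f (PhiIter f (ε i) k) θ u) :=
  (h.periodicField_domain (k + 1)).smooth_increment_sub_increment
    ((h.nearIdentity_phiIter k).mono (h.antitone k.le_succ)) (h.nearIdentity_phiIter (k + 1))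
    (h.isOpen (k + 1)) (h.isOpen (k + 2)) h.margin_pos (h.thickening_subset (k + 1)) hdiff

theorem smooth_phiIter_succ_sub_phiIter (h : AveragingScheme q D r M f ε) (k : ℕ) :
    SmoothFamily q (D (k + 1)) (ε ^ (k + 1))
      (fun i θ u ↦ PhiIter f (ε i) (k + 1) θ u - PhiIter f (ε i) k θ u) := by
  have hε : ∀ i, 0 ≤ ε i := fun i ↦ (h.param_pos i).le
  induction k with
  | zero =>
    have hprim := ((h.smooth_increment 0).primitive (h.isOpen 1)
      (fun i u hu ↦ h.periodic_increment 0 i hu)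
      fun i u hu ↦ h.integral_increment 0 i hu).const_smul hε
    rw [mul_one] at hprim
    rw [zero_add, pow_one]
    exact hprim.congr fun i θ u _ ↦ add_sub_cancel_left _ _
  | succ k ih =>
    have hsub : D (k + 2) ⊆ D (k + 1) := h.antitone (k + 1).le_succ
    have hint : ∀ (i : I) {u : E}, u ∈ D (k + 2) → ∀ θ : ℝ,
        ∫ τ in (0 : ℝ)..θ, (increment f (PhiIter f (ε i) (k + 1)) τ u
          - increment f (PhiIter f (ε i) k) τ u)
        = (∫ τ in (0 : ℝ)..θ, increment f (PhiIter f (ε i) (k + 1)) τ u)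
          - ∫ τ in (0 : ℝ)..θ, increment f (PhiIter f (ε i) k) τ u := fun i u hu θ ↦
      intervalIntegral.integral_sub
        (((h.smooth_increment (k + 1)).lipFamily.continuous i hu).intervalIntegrable _ _)
        (((h.smooth_increment k).lipFamily.continuous i (hsub hu)).intervalIntegrable _ _)
    have hprim := (h.smooth_increment_sub_increment ih).primitive (h.isOpen (k + 2))
      (fun i u hu ↦ (h.periodic_increment (k + 1) i hu).sub (h.periodic_increment k i (hsub hu)))
      fun i u hu ↦ by
        rw [hint i hu, h.integral_increment (k + 1) i hu, h.integral_increment k i (hsub hu),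
          sub_zero]
    rw [pow_succ']
    refine (hprim.const_smul hε).congr fun i θ u hu ↦ ?_
    rw [hint i hu, smul_sub]
    exact add_sub_add_left_eq_sub _ _ _

theorem hasDerivAt_phiIter_succ (h : AveragingScheme q D r M f ε) (k : ℕ) (i : I) (θ : ℝ) {u : E}
    (hu : u ∈ D (k + 1)) : HasDerivAt (fun τ ↦ PhiIter f (ε i) (k + 1) τ u)
      (ε i • increment f (PhiIter f (ε i) k) θ u) θ :=
  ((((h.smooth_increment k).lipFamily.continuous i hu).integral_hasStrictDerivAt 0
    θ).hasDerivAt.const_smul (ε i)).const_add u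

theorem defect_succ (h : AveragingScheme q D r M f ε) (k : ℕ) (i : I) (θ : ℝ) {u : E}
    (hu : u ∈ D (k + 1)) : defect f (ε i) (k + 1) θ u =
      -(increment f (PhiIter f (ε i) (k + 1)) θ u - increment f (PhiIter f (ε i) k) θ u) := by
  rw [defect, (h.hasDerivAt_phiIter_succ k i θ hu).deriv, smul_smul, one_div,
    inv_mul_cancel₀ (h.param_pos i).ne', one_smul, increment.eq_1 f (PhiIter f (ε i) (k + 1))]
  abel

theorem norm_fderiv_phiIter_sub_one_le (h : AveragingScheme q D r M f ε) (k : ℕ) (i : I) (θ : ℝ)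
    {u : E} (hu : u ∈ D (k + 1)) : ‖fderiv ℂ (PhiIter f (ε i) k θ) u - 1‖ ≤ 1 / 2 :=
  (h.nearIdentity_phiIter k).norm_fderiv_sub_one_le h.margin_pos (h.thickening_subset k) i θ hu

theorem smooth_rmap (h : AveragingScheme q D r M f ε) (k : ℕ) :
    SmoothFamily q (D (k + 2)) (ε ^ (k + 1)) (fun i ↦ Rmap f (ε i) (k + 1)) := by
  have hinv := ((h.nearIdentity_phiIter (k + 1)).smooth.fderiv h.margin_pos
    (h.thickening_subset (k + 1))).inverse fun i θ u ↦ h.norm_fderiv_phiIter_sub_one_le (k + 1) i θ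
  have hR := hinv.clm_apply
    (h.smooth_increment_sub_increment (h.smooth_phiIter_succ_sub_phiIter k))
  rw [one_mul] at hR
  refine hR.congr fun i θ u hu ↦ ?_
  rw [Rmap, h.defect_succ k i θ (h.antitone (k + 1).le_succ hu), map_neg, neg_neg]

end AveragingScheme

end Iteration

section AnalyticFields

theorem LipFamily.of_iteratedDeriv {f : ℝ → U → E} (hc : ∀ u ∈ O, ContDiff ℝ 1 (fun θ ↦ f θ u))
    (hf : ∀ θ, ContDiffOn ℂ ∞ (f θ) O)
    (hb : ∀ ν ≤ 1, ∃ B, ∀ θ, ∀ u ∈ O, ‖iteratedDeriv ν (fun τ ↦ f τ u) θ‖ ≤ B) :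
    LipFamily O (1 : I → ℝ) (fun _ ↦ f) where
  contDiffOn _ := hf
  weight_nonneg _ := zero_le_one
  bound := by
    obtain ⟨B, hB⟩ := hb 0 zero_le_one
    exact ⟨max B 0, le_max_right _ _, fun _ θ u hu ↦ by simpa using Or.inl (hB θ u hu)⟩
  lipschitz := by
    obtain ⟨B, hB⟩ := hb 1 le_rfl
    refine ⟨max B 0, le_max_right _ _, fun _ θ τ u hu ↦ ?_⟩
    simp only [iteratedDeriv_one] at hB
    simpa using convex_univ.norm_image_sub_le_of_norm_deriv_le
      (fun s _ ↦ (hc u hu).differentiable one_ne_zero s)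
      (fun s _ ↦ (hB s u hu).trans (le_max_left B 0)) (mem_univ τ) (mem_univ θ)

theorem SmoothFamily.of_iteratedDeriv {f : ℝ → U → E}
    (hc : ∀ u ∈ O, ContDiff ℝ (q + 1) (fun θ ↦ f θ u))
    (hf : ∀ ν ≤ q, ∀ θ, ContDiffOn ℂ ∞ (fun u ↦ iteratedDeriv ν (fun τ ↦ f τ u) θ) O)
    (hb : ∀ ν ≤ q + 1, ∃ B, ∀ θ, ∀ u ∈ O, ‖iteratedDeriv ν (fun τ ↦ f τ u) θ‖ ≤ B) :
    SmoothFamily q O (1 : I → ℝ) (fun _ ↦ f) := by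
  induction q generalizing f with
  | zero => exact LipFamily.of_iteratedDeriv (by simpa using hc) (by simpa using hf 0 le_rfl) hb
  | succ q ih =>
    refine ⟨.of_iteratedDeriv (fun u hu ↦ (hc u hu).of_le (by simp))
        (by simpa using hf 0 (by lia)) fun ν hν ↦ hb ν (by lia),
      fun _ θ u ↦ deriv (fun τ ↦ f τ u) θ,
      fun _ θ u hu ↦ ((hc u hu).differentiable (by simp) θ).hasDerivAt,
      ih (fun u hu ↦ ?_) (fun ν hν θ ↦ ?_) fun ν hν ↦ ?_⟩
    · exact (contDiff_succ_iff_deriv.1 (by exact_mod_cast hc u hu)).2.2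
    · simpa only [iteratedDeriv_succ'] using hf (ν + 1) (by lia) θ
    · simpa only [iteratedDeriv_succ'] using hb (ν + 1) (by lia)

theorem PeriodicField.of_analyticOn {O : Set E} (hO : IsOpen O) {f : ℝ → E → E} {M : ℝ}
    (hper : ∀ u ∈ O, Function.Periodic (fun θ ↦ f θ u) 1)
    (hc : ∀ u ∈ O, ContDiff ℝ (q + 1) (fun θ ↦ f θ u))
    (hf : ∀ ν ≤ q, ∀ θ, AnalyticOn ℂ (fun u ↦ iteratedDeriv ν (fun τ ↦ f τ u) θ) O)
    (hM : ∀ θ, ∀ u ∈ O, ‖f θ u‖ ≤ M)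
    (hb : ∀ ν ≤ q + 1, ∃ B, ∀ θ, ∀ u ∈ O, ‖iteratedDeriv ν (fun τ ↦ f τ u) θ‖ ≤ B) :
    PeriodicField q O M f where
  smooth := .of_iteratedDeriv hc (fun ν hν θ ↦ (hf ν hν θ).contDiffOn hO.uniqueDiffOn) hb
  norm_le := hM
  periodic := hper

end AnalyticFields

section Main

variable {f : ℝ → E → E} {M : ℝ} {ε : I → ℝ}

theorem AveragingScheme.of_thickening {S : Set E} {ρ : ℝ} (hS : Bornology.IsBounded S)
    (hr : 0 < r) (hM : 0 < M) (hf : PeriodicField q (thickening ρ S) M f)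
    (hε : ∀ i, 0 < ε i) (hεr : ∀ i, 8 * M * ε i ≤ r) :
    AveragingScheme q (fun k ↦ thickening (ρ - k * r) S) r M f ε where
  isOpen _ := isOpen_thickening
  thickening_subset k := by
    refine (thickening_thickening_subset _ _ _).trans (thickening_mono (le_of_eq ?_) S)
    push_cast
    ring
  isBounded := hS.thickening
  margin_pos := hr
  periodicField := by simpa using hf
  bound_pos := hM
  param_pos := hε
  param_le := hεr

theorem AveragingScheme.exists_norm_iteratedDeriv_rmap_le [CompleteSpace E] {D : ℕ → Set E}
    {O : Set E} (h : AveragingScheme q D r M f ε) (k : ℕ) (hs : 0 < s)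
    (hO : thickening s O ⊆ D (k + 2)) (m : ℕ) :
    ∃ C, ∀ ν ≤ q + 1, ∀ ξ ≤ m, ∀ i θ, ∀ u ∈ O,
      ‖iteratedDeriv ν (fun τ ↦ iteratedFDeriv ℂ ξ (Rmap f (ε i) (k + 1) τ) u) θ‖
        ≤ C * ε i ^ (k + 1) := by
  refine Eventually.exists (f := atTop) ((eventually_all_finite (finite_Iic (q + 1))).2 fun ν hν ↦
    (eventually_all_finite (finite_Iic m)).2 fun ξ _ ↦ ?_)
  obtain ⟨C, -, hC⟩ := ((h.smooth_rmap k).iteratedFDeriv hs hO ξ).exists_norm_iteratedDeriv_le hν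
  filter_upwards [eventually_ge_atTop C] with C' hCC' i θ u hu
  exact (hC i θ u hu).trans
    (mul_le_mul_of_nonneg_right hCC' (pow_nonneg (h.param_pos i).le (k + 1)))

theorem thickening_subset_kset {X : Type*} [NormedAddCommGroup X] [NormedSpace ℝ X]
    (ι : X →ₗᵢ[ℝ] E) (K : Set X) (ρ : ℝ) : thickening ρ (ι '' closure K) ⊆ Kset ι K ρ := by
  intro z hz
  obtain ⟨_, ⟨u, hu, rfl⟩, hdist⟩ := mem_thickening_iff.1 hz
  exact ⟨u, hu, z - ι u, (dist_eq_norm z (ι u) ▸ hdist).le, (add_sub_cancel _ _).symm⟩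

theorem kset_subset_thickening {X : Type*} [NormedAddCommGroup X] [NormedSpace ℝ X]
    (ι : X →ₗᵢ[ℝ] E) (K : Set X) {ρ ρ' : ℝ} (hρ : ρ < ρ') :
    Kset ι K ρ ⊆ thickening ρ' (ι '' closure K) := by
  rintro _ ⟨u, hu, w, hw, rfl⟩
  exact mem_thickening_iff.2 ⟨ι u, mem_image_of_mem ι hu, by simpa using hw.trans_lt hρ⟩

theorem norm_iteratedDeriv_comp_div_le {V : Type*} [NormedAddCommGroup V] [NormedSpace ℝ V]
    {φ : ℝ → V} {C ε : ℝ} {ν : ℕ} (hε : 0 < ε) (hC : ∀ θ, ‖iteratedDeriv ν φ θ‖ ≤ C) (t : ℝ) :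
    ‖iteratedDeriv ν (fun s ↦ φ (s / ε)) t‖ ≤ C / ε ^ ν := by
  simp only [div_eq_inv_mul, iteratedDeriv_comp_mul_left]
  rw [norm_smul, norm_pow, norm_inv, Real.norm_of_nonneg hε.le, inv_pow]
  gcongr
  exact hC _

end Main

end StroboscopicAveraging

open StroboscopicAveraging Metric in
theorem statement8_general {X Xc : Type*} [NormedAddCommGroup X] [NormedSpace ℝ X]
    [NormedAddCommGroup Xc] [NormedSpace ℂ Xc] [CompleteSpace Xc] (ι : X →ₗᵢ[ℝ] Xc) (K : Set X)
    (hK : Bornology.IsBounded (closure K)) (f : ℝ → Xc → Xc) (p : ℕ) (hp : 1 ≤ p) (R M : ℝ)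
    (hR : 0 < R) (hM : 0 < M)
    (hper : ∀ u ∈ Kset ι K (2 * R), Function.Periodic (fun θ ↦ f θ u) 1)
    (hcontDiff : ∀ u ∈ Kset ι K (2 * R), ContDiff ℝ p (fun θ ↦ f θ u))
    (hanalytic : ∀ ν < p, ∀ θ,
      AnalyticOn ℂ (fun u ↦ iteratedDeriv ν (fun τ ↦ f τ u) θ) (Kset ι K (2 * R)))
    (hbound : ∀ θ, ∀ u ∈ Kset ι K (2 * R), ‖f θ u‖ ≤ M)
    (hbound_deriv : ∀ ν ≤ p, ∃ B, ∀ θ, ∀ u ∈ Kset ι K (2 * R),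
      ‖iteratedDeriv ν (fun τ ↦ f τ u) θ‖ ≤ B)
    (n : ℕ) (hn : 1 ≤ n) :
    (∀ ε : ℝ, 0 < ε → (n + 1 : ℝ) * ε ≤ R / (8 * M) → ∀ θ, ∀ u ∈ Kset ι K (R / 2),
      (fderiv ℂ (PhiIter f ε n θ) u).IsInvertible) ∧
    ∀ m : ℕ, ∃ C : ℝ, ∀ ε : ℝ, 0 < ε → (n + 1 : ℝ) * ε ≤ R / (8 * M) → ∀ ν ≤ p, ∀ ξ ≤ m,
      (∀ θ, ∀ u ∈ Kset ι K (R / 2),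
        ‖iteratedDeriv ν (fun τ ↦ iteratedFDeriv ℂ ξ (Rmap f ε n τ) u) θ‖ ≤ C * ε ^ n) ∧
      ∀ t, ∀ u ∈ Kset ι K (R / 2),
        ‖iteratedDeriv ν (fun s ↦ iteratedFDeriv ℂ ξ (Rmap f ε n (s / ε)) u) t‖
          ≤ C * ε ^ n / ε ^ ν := by
  obtain ⟨q, rfl⟩ := Nat.exists_eq_add_of_le' hp
  obtain ⟨k, rfl⟩ := Nat.exists_eq_add_of_le' hn
  have hfield : PeriodicField q (thickening (2 * R) (ι '' closure K)) M f :=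
    have hsub := thickening_subset_kset ι K (2 * R)
    .of_analyticOn isOpen_thickening (fun u hu ↦ hper u (hsub hu))
      (fun u hu ↦ mod_cast hcontDiff u (hsub hu))
      (fun ν hν θ ↦ (hanalytic ν (Nat.lt_succ_of_le hν) θ).mono hsub)
      (fun θ u hu ↦ hbound θ u (hsub hu))
      fun ν hν ↦ (hbound_deriv ν hν).imp fun B hB θ u hu ↦ hB θ u (hsub hu)
  have hscheme := AveragingScheme.of_thickening (r := R / ((k + 1 : ℕ) + 1))
    (ε := fun i : {ε : ℝ // 0 < ε ∧ ((k + 1 : ℕ) + 1 : ℝ) * ε ≤ R / (8 * M)} ↦ i.1)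
    (ι.lipschitz.isBounded_image hK) (by positivity) hM hfield (fun i ↦ i.2.1) fun i ↦ by
      have := i.2.2
      rw [le_div_iff₀ (by positivity)] at this ⊢
      linarith
  have hdomain : thickening R (ι '' closure K) ⊆
      thickening (2 * R - (k + 2 : ℕ) * (R / ((k + 1 : ℕ) + 1))) (ι '' closure K) :=
    thickening_mono (le_of_eq (by push_cast; field_simp; ring)) _
  refine ⟨fun ε hε hεR θ u hu ↦ isInvertible_of_norm_sub_one_le_half
    (hscheme.norm_fderiv_phiIter_sub_one_le (k + 1) ⟨ε, hε, hεR⟩ θ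
      (hdomain (kset_subset_thickening ι K (by linarith) hu))), fun m ↦ ?_⟩
  obtain ⟨C, hC⟩ := hscheme.exists_norm_iteratedDeriv_rmap_le k (s := R / 4)
    (O := thickening (3 * R / 4) (ι '' closure K)) (by positivity)
    ((thickening_thickening_subset _ _ _).trans
      ((thickening_mono (by linarith) _).trans hdomain)) m
  refine ⟨C, fun ε hε hεR ν hν ξ hξ ↦ ?_⟩
  have hrmap θ u (hu : u ∈ Kset ι K (R / 2)) := hC ν hν ξ hξ ⟨ε, hε, hεR⟩ θ u
    (kset_subset_thickening ι K (by linarith) hu)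
  exact ⟨hrmap, fun t u hu ↦ norm_iteratedDeriv_comp_div_le hε (fun θ ↦ hrmap θ u hu) t⟩

/-- Under Assumptions (K) and (A_p), with `ε₀ = R/(8M)` and `(n+1)ε ≤ ε₀`, the map
`R^[n]_θ(u) = −(∂_uΦ^[n]_θ(u))⁻¹ δ^[n]_θ(u)` is well-defined on `𝕋 × K_{R/2}` and there is
a constant `C`, independent of `ε`, with `‖∂_θ^ν ∂_u^ξ R^[n]‖ ≤ C ε^n` on `𝕋 × K_{R/2}`
for `ν + ξ ≤ p`; equivalently `‖∂_t^ν ∂_u^ξ R^[n]_{t/ε}‖ ≤ C ε^{n−ν}`. -/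
theorem statement8
    {X Xc : Type*} [NormedAddCommGroup X] [NormedSpace ℝ X] [CompleteSpace X]
    [NormedAddCommGroup Xc] [NormedSpace ℂ Xc] [CompleteSpace Xc]
    (ι : X →ₗᵢ[ℝ] Xc)
    (K U0 : Set X) (hKopen : IsOpen K) (hKbdd : Bornology.IsBounded (closure K))
    (hU0open : IsOpen U0) (hU0K : U0 ⊆ K)
    (fX : ℝ → X → X) (fC : ℝ → Xc → Xc)
    (hper : ∀ u, Function.Periodic (fun θ => fX θ u) 1)
    (hperC : ∀ u, Function.Periodic (fun θ => fC θ u) 1)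
    -- Assumption (K)
    (hAssK : ∀ u₀ ∈ U0, ∀ ε ∈ Set.Ioc (0:ℝ) 1, ∃ u : ℝ → X, u 0 = u₀ ∧
      ∀ t ∈ Set.Icc (0:ℝ) 1, HasDerivAt u (fX (t/ε) (u t)) t ∧ u t ∈ K)
    -- Assumption (A_p)
    (p : ℕ) (hp : 1 ≤ p)
    (R M : ℝ) (hR : 0 < R) (hM : 0 < M)
    (hcontdiffθ : ∀ u, ContDiff ℝ p (fun θ => fC θ u))
    (hext : ∀ θ, ∀ x : X, ι x ∈ Kset ι K (2*R) → fC θ (ι x) = ι (fX θ x))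
    (hanal : ∀ ν ≤ p, ∀ θ : ℝ,
      AnalyticOn ℂ (fun u => iteratedDeriv ν (fun τ => fC τ u) θ) (Kset ι K (2*R)))
    (hbound : ∀ σ ∈ Set.Ioc (0:ℝ) 3, ∀ ν ≤ p, ∀ θ : ℝ, ∀ u ∈ Kset ι K (2*R),
      σ^ν / (Nat.factorial ν) * ‖iteratedDeriv ν (fun τ => fC τ u) θ‖ ≤ M)
    (ε₀ : ℝ) (hε₀ : ε₀ = R / (8*M))
    (n : ℕ) (hn : 1 ≤ n) :
    -- well-definedness: ∂_uΦ^[n]_θ(u) is invertible on K_{R/2}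
    (∀ ε : ℝ, 0 < ε → (n+1 : ℝ) * ε ≤ ε₀ → ∀ θ : ℝ, ∀ u ∈ Kset ι K (R/2),
        ∃ e : Xc ≃L[ℂ] Xc, (e : Xc →L[ℂ] Xc) = fderiv ℂ (PhiIter fC ε n θ) u) ∧
    -- the uniform bounds, with a constant C independent of ε
    ∃ C : ℝ, ∀ ε : ℝ, 0 < ε → (n+1 : ℝ) * ε ≤ ε₀ →
      ∀ ν ξ : ℕ, ν + ξ ≤ p →
        (∀ θ : ℝ, ∀ u ∈ Kset ι K (R/2),
          ‖iteratedDeriv ν (fun τ => iteratedFDeriv ℂ ξ (Rmap fC ε n τ) u) θ‖ ≤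
            C * ε^n) ∧
        (∀ t : ℝ, ∀ u ∈ Kset ι K (R/2),
          ‖iteratedDeriv ν (fun s => iteratedFDeriv ℂ ξ (Rmap fC ε n (s/ε)) u) t‖ ≤
            C * ε^n / ε^ν) := by
  subst hε₀
  have hderiv : ∀ ν ≤ p, ∀ θ, ∀ u ∈ Kset ι K (2 * R),
      ‖iteratedDeriv ν (fun τ ↦ fC τ u) θ‖ ≤ ν.factorial * M := fun ν hν θ u hu ↦
    (inv_mul_le_iff₀ (Nat.cast_pos.2 ν.factorial_pos)).1 <| by
      simpa using hbound 1 (by norm_num) ν hν θ u hu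
  obtain ⟨hinv, hrmap⟩ := statement8_general ι K hKbdd fC p hp R M hR hM (fun u _ ↦ hperC u)
    (fun u _ ↦ hcontdiffθ u) (fun ν hν ↦ hanal ν hν.le)
    (fun θ u hu ↦ by simpa using hderiv 0 p.zero_le θ u hu) (fun ν hν ↦ ⟨_, hderiv ν hν⟩) n hn
  exact ⟨hinv, (hrmap p).imp fun C hC ε hε hεR ν ξ hνξ ↦ hC ε hε hεR ν (by lia) ξ (by lia)⟩
end

section
/- Let (g_k)_{k≥1} be a sequence of real numbers such that g_1 ≤ e and, for every k ≥ 1, g_{k+1} ≤ 3 + g_k/4 + (e − 1)·exp( g_k/(8k + 4) ). Then g_k ≤ 8 for all k ≥ 1. -/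
/-!
The induction carries two bounds at once, `g k ≤ 8` and `g k / (8 * k + 4) ≤ 2 / 5`. Since
`exp (2 / 5) ≤ 1 / (1 - 2 / 5) = 5 / 3` and `e - 1 ≤ 9 / 5`, they make the right-hand side of
the recurrence at most `3 + 8 / 4 + 9 / 5 * (5 / 3) = 8`. The second bound then reproduces itself,
because the next denominator is at least `20` and `8 / 20 = 2 / 5`. Only at `k = 1`, where the
denominator is `12`, does it ask for more than `g k ≤ 8`, namely `g 1 ≤ 24 / 5`.
-/

theorem exp_le_five_thirds {t : ℝ} (ht : t ≤ 2 / 5) : Real.exp t ≤ 5 / 3 :=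
  calc
    Real.exp t ≤ Real.exp (2 / 5) := Real.exp_le_exp.mpr ht
    _ ≤ 1 / (1 - 2 / 5) := Real.exp_bound_div_one_sub_of_interval (by norm_num) (by norm_num)
    _ = 5 / 3 := by norm_num

theorem three_add_div_four_add_mul_exp_le_eight {c x t : ℝ} (hc : c ≤ 9 / 5) (hx : x ≤ 8)
    (ht : t ≤ 2 / 5) : 3 + x / 4 + c * Real.exp t ≤ 8 :=
  calc
    3 + x / 4 + c * Real.exp t ≤ 3 + 8 / 4 + 9 / 5 * (5 / 3) := by
      gcongr
      exact exp_le_five_thirds ht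
    _ = 8 := by norm_num

theorem div_eight_mul_add_four_le_two_fifths {x y : ℝ} (hx : x ≤ 8) (hy : 2 ≤ y) :
    x / (8 * y + 4) ≤ 2 / 5 := by
  rw [div_le_iff₀ (by positivity)]
  linarith

theorem statement13_general (g : ℕ → ℝ) {c : ℝ} (hc : c ≤ 9 / 5) (h1 : g 1 ≤ 24 / 5)
    (hrec : ∀ k : ℕ, 1 ≤ k →
      g (k + 1) ≤ 3 + g k / 4 + c * Real.exp (g k / (8 * k + 4))) :
    ∀ k : ℕ, 1 ≤ k → g k ≤ 8 := by
  suffices invariant : ∀ k : ℕ, 1 ≤ k → g k ≤ 8 ∧ g k / (8 * k + 4) ≤ 2 / 5 from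
    fun k hk => (invariant k hk).1
  intro k hk
  induction k, hk using Nat.le_induction with
  | base =>
    refine ⟨by linarith, ?_⟩
    calc
      g 1 / (8 * (1 : ℕ) + 4) = g 1 / 12 := by norm_num
      _ ≤ 2 / 5 := by linarith
  | succ k hk ih =>
    have next_le : g (k + 1) ≤ 8 :=
      (hrec k hk).trans (three_add_div_four_add_mul_exp_le_eight hc ih.1 ih.2)
    have two_le_succ : (2 : ℝ) ≤ (k + 1 : ℕ) := by exact_mod_cast Nat.succ_le_succ hk
    exact ⟨next_le, div_eight_mul_add_four_le_two_fifths next_le two_le_succ⟩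

/-- If `g₁ ≤ e` and `g_{k+1} ≤ 3 + g_k/4 + (e−1)·exp(g_k/(8k+4))` for all `k ≥ 1`,
then `g_k ≤ 8` for all `k ≥ 1`. -/
theorem statement13 (g : ℕ → ℝ)
    (h1 : g 1 ≤ Real.exp 1)
    (hrec : ∀ k : ℕ, 1 ≤ k →
      g (k+1) ≤ 3 + g k / 4 + (Real.exp 1 - 1) * Real.exp (g k / (8*k + 4))) :
    ∀ k : ℕ, 1 ≤ k → g k ≤ 8 := by
  have exp_one_le : Real.exp 1 ≤ 14 / 5 := by linarith [Real.exp_one_lt_d9]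
  exact statement13_general g (by linarith) (by linarith) hrec
end

section
/- For ξ ≥ 0 and an integer ν ≥ 0, let P_ν(ξ) denote the ν-th derivative at x = 0 of the function x ↦ exp( x + ξx/(1−x) ) / (1−x), which is analytic on the complex disc |x| < 1. Then |P_ν(ξ)| ≤ 2^{ν+1} · √e · e^{ξ} · ν! for all ξ ≥ 0 and all ν ≥ 0. -/
/-!
On the circle `‖x‖ = r < 1` we have `‖1 - x‖ ≥ 1 - r`, so the generating function is bounded there
by `exp (r + ‖ξ‖ r / (1 - r)) / (1 - r)`, and Cauchy's estimate divides this by `r ^ ν / ν!`.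
The radius `r = 1 / 2` makes `r / (1 - r) = 1`, whence the factor `√e · e^‖ξ‖`.
-/

theorem one_sub_norm_le_norm_one_sub {E : Type*} [SeminormedAddCommGroup E] [One E]
    [NormOneClass E] (z : E) : 1 - ‖z‖ ≤ ‖1 - z‖ := by
  simpa only [norm_one] using norm_sub_norm_le 1 z

theorem norm_div_one_sub_le {𝕜 : Type*} [NormedDivisionRing 𝕜] {z : 𝕜} (hz : ‖z‖ < 1) (w : 𝕜) :
    ‖w / (1 - z)‖ ≤ ‖w‖ / (1 - ‖z‖) := by
  rw [norm_div]
  exact div_le_div_of_nonneg_left (norm_nonneg w) (sub_pos.2 hz) (one_sub_norm_le_norm_one_sub z)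

/-- The function `G_ξ(x) = exp (x + ξx / (1 - x)) / (1 - x)`, the exponential generating function of
the `P_ν(ξ)`: without the summand `x` in the exponent it would generate the Laguerre polynomials
at `-ξ`. The parameter `ξ` is complex, and division by zero gives `G_ξ(1) = 0`. -/
noncomputable def expLaguerreGenFun (ξ x : ℂ) : ℂ :=
  Complex.exp (x + ξ * x / (1 - x)) / (1 - x)

theorem differentiableOn_expLaguerreGenFun (ξ : ℂ) :
    DifferentiableOn ℂ (expLaguerreGenFun ξ) {1}ᶜ := by
  intro x hx
  have hx' : 1 - x ≠ 0 := sub_ne_zero.2 (Ne.symm hx)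
  unfold expLaguerreGenFun
  fun_prop (disch := assumption)

theorem diffContOnCl_expLaguerreGenFun_ball (ξ : ℂ) {r : ℝ} (hr : r < 1) :
    DiffContOnCl ℂ (expLaguerreGenFun ξ) (Metric.ball 0 r) := by
  refine ((differentiableOn_expLaguerreGenFun ξ).mono ?_).diffContOnCl
  rintro x hx rfl
  have h_one_le : 1 ≤ r := by
    simpa only [mem_closedBall_zero_iff, norm_one] using Metric.closure_ball_subset_closedBall hx
  exact hr.not_ge h_one_le

theorem norm_expLaguerreGenFun_le (ξ : ℂ) {x : ℂ} (hx : ‖x‖ < 1) :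
    ‖expLaguerreGenFun ξ x‖ ≤ Real.exp (‖x‖ + ‖ξ‖ * ‖x‖ / (1 - ‖x‖)) / (1 - ‖x‖) := by
  have : 0 < 1 - ‖x‖ := sub_pos.2 hx
  have h_exponent : ‖x + ξ * x / (1 - x)‖ ≤ ‖x‖ + ‖ξ‖ * ‖x‖ / (1 - ‖x‖) :=
    norm_add_le_of_le le_rfl (by simpa only [norm_mul] using norm_div_one_sub_le hx (ξ * x))
  calc ‖expLaguerreGenFun ξ x‖
      ≤ ‖Complex.exp (x + ξ * x / (1 - x))‖ / (1 - ‖x‖) := norm_div_one_sub_le hx _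
    _ ≤ Real.exp ‖x + ξ * x / (1 - x)‖ / (1 - ‖x‖) := by
        gcongr
        exact Complex.norm_exp_le_exp_norm _
    _ ≤ Real.exp (‖x‖ + ‖ξ‖ * ‖x‖ / (1 - ‖x‖)) / (1 - ‖x‖) := by gcongr

theorem norm_iteratedDeriv_expLaguerreGenFun_zero_le (ξ : ℂ) (ν : ℕ) {r : ℝ} (hr₀ : 0 < r)
    (hr₁ : r < 1) :
    ‖iteratedDeriv ν (expLaguerreGenFun ξ) 0‖ ≤
      ν.factorial * (Real.exp (r + ‖ξ‖ * r / (1 - r)) / (1 - r)) / r ^ ν := by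
  refine Complex.norm_iteratedDeriv_le_of_forall_mem_sphere_norm_le ν hr₀
    (diffContOnCl_expLaguerreGenFun_ball ξ hr₁) fun x hx ↦ ?_
  obtain rfl : ‖x‖ = r := mem_sphere_zero_iff_norm.1 hx
  exact norm_expLaguerreGenFun_le ξ hr₁

theorem statement14_general (ξ : ℂ) (ν : ℕ) :
    ‖iteratedDeriv ν (expLaguerreGenFun ξ) 0‖ ≤
      2 ^ (ν + 1) * Real.sqrt (Real.exp 1) * Real.exp ‖ξ‖ * ν.factorial := by
  have h_exponent : (1 / 2 : ℝ) + ‖ξ‖ * (1 / 2) / (1 - 1 / 2) = 1 / 2 + ‖ξ‖ := by ring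
  calc ‖iteratedDeriv ν (expLaguerreGenFun ξ) 0‖
      ≤ ν.factorial * (Real.exp (1 / 2 + ‖ξ‖ * (1 / 2) / (1 - 1 / 2)) / (1 - 1 / 2)) /
          (1 / 2) ^ ν :=
        norm_iteratedDeriv_expLaguerreGenFun_zero_le ξ ν one_half_pos one_half_lt_one
    _ = 2 ^ (ν + 1) * Real.sqrt (Real.exp 1) * Real.exp ‖ξ‖ * ν.factorial := by
        rw [h_exponent, Real.exp_add, Real.exp_half, one_div, inv_pow, div_inv_eq_mul]
        ring

/-- Cauchy estimate: the ν-th derivative at `x = 0` of the analytic function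
`x ↦ exp(x + ξx/(1−x))/(1−x)` is bounded by `2^{ν+1}·√e·e^ξ·ν!` for every `ξ ≥ 0`. -/
theorem statement14 (ξ : ℝ) (hξ : 0 ≤ ξ) (ν : ℕ) :
    ‖iteratedDeriv ν
        (fun x : ℂ => Complex.exp (x + (ξ:ℂ) * x / (1 - x)) / (1 - x)) 0‖ ≤
      2^(ν+1) * Real.sqrt (Real.exp 1) * Real.exp ξ * (Nat.factorial ν) := by
  exact (statement14_general ξ ν).trans_eq (by rw [Complex.norm_of_nonneg hξ])
end

section
/- Let X be a Banach space, ε ∈ (0,1], and let L : [0,1] → B(X) be a continuous family of bounded linear operators with ‖L(t)‖ ≤ 𝓛 for all t. Let b : ℝ × [0,1] → X be continuously differentiable, 1-periodic in its first variable θ, with ∫₀¹ b(θ,t) dθ = 0 for every t ∈ [0,1], and with sup |b| ≤ B, sup ‖∂_θ b‖ ≤ B and sup ‖∂_t b‖ ≤ B. If w : [0,1] → X is differentiable with ẇ(t) = L(t) w(t) + b(t/ε, t) and w(0) = 0, then there exists a constant M₀, independent of ε, B, 𝓛 and w (for instance M₀ = 3), such that ‖w(t)‖ ≤ M₀ ·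 B · e^{𝓛 t} · ε for all t ∈ [0,1]. -/
open Set

/-!
Freeze the slow variable `t` at the start of each fast period: the frozen source integrates to zero
over the period, so, `b θ` being Lipschitz in `t`, the true source contributes only `O(ε²)` there.
Summing over the `O(1/ε)` periods of the time interval, and bounding the source by its supremum on
the last, incomplete period, gives `∫₀ᵗ b(s/ε, s) ds = O(ε)`. Subtracting this primitive from `w`
removes the source from the equation at the price of an `O(ε)` error, to which Gronwall's
inequality applies.
-/

open Function MeasureTheory Real
open scoped NNReal

section Diagonal

variable {X : Type*} [NormedAddCommGroup X] [NormedSpace ℝ X]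
  {f : ℝ → ℝ → X} {a b P B : ℝ} {C : ℝ≥0}

lemma norm_integral_diagonal_add_period_le (hP : 0 ≤ P)
    (hdiag : IntervalIntegrable (fun s => f s s) volume a (a + P))
    (hfrozen : IntervalIntegrable (fun s => f s a) volume a (a + P))
    (hzero : ∫ s in a..a + P, f s a = 0)
    (hlip : ∀ s, LipschitzOnWith C (f s) (Icc a (a + P))) :
    ‖∫ s in a..a + P, f s s‖ ≤ C * P ^ 2 := by
  have hdev : ∀ s ∈ uIoc a (a + P), ‖f s s - f s a‖ ≤ C * P := by
    intro s hs
    rw [uIoc_of_le (by linarith)] at hs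
    calc ‖f s s - f s a‖ ≤ C * ‖s - a‖ :=
          (hlip s).norm_sub_le (Ioc_subset_Icc_self hs) (left_mem_Icc.2 (by linarith))
      _ ≤ C * P := by
          rw [Real.norm_of_nonneg (by linarith [hs.1])]
          gcongr
          linarith [hs.2]
  calc ‖∫ s in a..a + P, f s s‖ = ‖∫ s in a..a + P, (f s s - f s a)‖ := by
        rw [intervalIntegral.integral_sub hdiag hfrozen, hzero, sub_zero]
    _ ≤ C * P * |a + P - a| := intervalIntegral.norm_integral_le_of_norm_le_const hdev
    _ = C * P ^ 2 := by rw [add_sub_cancel_left, abs_of_nonneg hP]; ring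

lemma norm_integral_diagonal_add_nat_mul_period_le (hP : 0 ≤ P) (n : ℕ)
    (hf : Continuous (uncurry f)) (hper : ∀ t, Periodic (fun s => f s t) P)
    (hzero : ∀ t ∈ Icc a (a + n * P), ∫ s in (0 : ℝ)..P, f s t = 0)
    (hlip : ∀ s, LipschitzOnWith C (f s) (Icc a (a + n * P))) :
    ‖∫ s in a..a + n * P, f s s‖ ≤ n * (C * P ^ 2) := by
  have hdiag : Continuous fun s => f s s := hf.comp (continuous_id.prodMk continuous_id)
  have hfrozen : ∀ t, Continuous fun s => f s t := fun t => hf.comp (Continuous.prodMk_left t)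
  have hperiod : ∀ k < n, ‖∫ s in a + k * P..a + (k + 1 : ℕ) * P, f s s‖ ≤ C * P ^ 2 := by
    intro k hk
    have hstart : 0 ≤ k * P := by positivity
    have hend : (k + 1 : ℕ) * P ≤ n * P := by gcongr; exact hk
    have hsucc : a + (k + 1 : ℕ) * P = a + k * P + P := by push_cast; ring
    rw [hsucc]
    refine norm_integral_diagonal_add_period_le hP (hdiag.intervalIntegrable _ _)
      ((hfrozen _).intervalIntegrable _ _) ?_ fun s => (hlip s).mono ?_
    · rw [(hper _).intervalIntegral_add_eq _ 0, zero_add]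
      exact hzero _ ⟨by linarith, by linarith⟩
    · exact Icc_subset_Icc (by linarith) (by linarith)
  calc ‖∫ s in a..a + n * P, f s s‖
      = ‖∑ k ∈ Finset.range n, ∫ s in a + k * P..a + (k + 1 : ℕ) * P, f s s‖ := by
        rw [intervalIntegral.sum_integral_adjacent_intervals (a := fun k : ℕ => a + k * P)
          fun k _ => hdiag.intervalIntegrable _ _]
        simp only [Nat.cast_zero, zero_mul, add_zero]
    _ ≤ ∑ _k ∈ Finset.range n, C * P ^ 2 :=
        norm_sum_le_of_le _ fun k hk => hperiod k (Finset.mem_range.1 hk)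
    _ = n * (C * P ^ 2) := by rw [Finset.sum_const, Finset.card_range, nsmul_eq_mul]

lemma norm_integral_diagonal_le (hP : 0 < P) (hab : a ≤ b)
    (hf : Continuous (uncurry f)) (hper : ∀ t, Periodic (fun s => f s t) P)
    (hzero : ∀ t ∈ Icc a b, ∫ s in (0 : ℝ)..P, f s t = 0)
    (hB : ∀ t ∈ Icc a b, ‖f t t‖ ≤ B)
    (hlip : ∀ s, LipschitzOnWith C (f s) (Icc a b)) :
    ‖∫ s in a..b, f s s‖ ≤ (B + C * (b - a)) * P := by
  have hdiag : Continuous fun s => f s s := hf.comp (continuous_id.prodMk continuous_id)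
  have hB0 : 0 ≤ B := (norm_nonneg _).trans (hB a (left_mem_Icc.2 hab))
  obtain ⟨n, hn, hn'⟩ : ∃ n : ℕ, n * P ≤ b - a ∧ b - a < (n + 1) * P :=
    ⟨⌊(b - a) / P⌋₊,
      (le_div_iff₀ hP).1 (Nat.floor_le (div_nonneg (sub_nonneg.2 hab) hP.le)),
      (div_lt_iff₀ hP).1 (Nat.lt_floor_add_one _)⟩
  have hstart : 0 ≤ n * P := by positivity
  have hsub : Icc a (a + n * P) ⊆ Icc a b := Icc_subset_Icc le_rfl (by linarith)
  have hfull : ‖∫ s in a..a + n * P, f s s‖ ≤ C * (b - a) * P :=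
    calc ‖∫ s in a..a + n * P, f s s‖ ≤ n * (C * P ^ 2) :=
          norm_integral_diagonal_add_nat_mul_period_le hP.le n hf hper
            (fun t ht => hzero t (hsub ht)) fun s => (hlip s).mono hsub
      _ = C * (n * P) * P := by ring
      _ ≤ C * (b - a) * P := by gcongr
  have hlast : ‖∫ s in a + n * P..b, f s s‖ ≤ B * P :=
    calc ‖∫ s in a + n * P..b, f s s‖ ≤ B * |b - (a + n * P)| := by
          refine intervalIntegral.norm_integral_le_of_norm_le_const fun s hs => hB s ?_
          rw [uIoc_of_le (by linarith)] at hs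
          exact ⟨by linarith [hs.1], hs.2⟩
      _ ≤ B * P := by
          rw [abs_of_nonneg (by linarith)]
          gcongr
          linarith
  calc ‖∫ s in a..b, f s s‖
      = ‖(∫ s in a..a + n * P, f s s) + ∫ s in a + n * P..b, f s s‖ := by
        rw [intervalIntegral.integral_add_adjacent_intervals] <;> exact hdiag.intervalIntegrable _ _
    _ ≤ C * (b - a) * P + B * P := norm_add_le_of_le hfull hlast
    _ = (B + C * (b - a)) * P := by ring

end Diagonal

lemma norm_integral_oscillatory_le {X : Type*} [NormedAddCommGroup X] [NormedSpace ℝ X]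
    {ε t B : ℝ} {C : ℝ≥0} (hε : 0 < ε) (ht : 0 ≤ t) {b : ℝ → ℝ → X}
    (hb : Continuous (uncurry b)) (hper : ∀ s, Periodic (fun θ => b θ s) 1)
    (hzero : ∀ s ∈ Icc 0 t, ∫ θ in (0 : ℝ)..1, b θ s = 0)
    (hB : ∀ θ, ∀ s ∈ Icc 0 t, ‖b θ s‖ ≤ B)
    (hlip : ∀ θ, LipschitzOnWith C (b θ) (Icc 0 t)) :
    ‖∫ s in (0 : ℝ)..t, b (s / ε) s‖ ≤ (B + C * t) * ε := by
  have hscaled : Continuous (uncurry fun s => b (s / ε)) :=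
    hb.comp ((continuous_fst.div_const ε).prodMk continuous_snd)
  have hscaled_per : ∀ s, Periodic (fun r => b (r / ε) s) ε := fun s => by
    simpa only [one_mul] using (hper s).div_const ε
  have hscaled_zero : ∀ s ∈ Icc 0 t, ∫ r in (0 : ℝ)..ε, b (r / ε) s = 0 := fun s hs => by
    rw [intervalIntegral.integral_comp_div (fun θ => b θ s) hε.ne', zero_div, div_self hε.ne',
      hzero s hs, smul_zero]
  simpa only [sub_zero] using norm_integral_diagonal_le hε ht hscaled hscaled_per hscaled_zero
    (fun s hs => hB (s / ε) s hs) fun s => hlip (s / ε)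

lemma gronwallBound_ε_eq_K_mul (η K δ x : ℝ) :
    gronwallBound η K (K * δ) x = (η + δ) * exp (K * x) - δ := by
  rcases eq_or_ne K 0 with rfl | hK
  · simp only [gronwallBound_K0, zero_mul, exp_zero]
    ring
  · rw [gronwallBound_of_K_ne_0 hK, mul_div_cancel_left₀ _ hK]
    ring

lemma norm_le_mul_exp_of_norm_deriv_right_sub_le {X : Type*} [NormedAddCommGroup X]
    [NormedSpace ℝ X] {w w' g g' : ℝ → X} {a b K δ : ℝ} (hK : 0 ≤ K)
    (hw : ContinuousOn w (Icc a b)) (hw' : ∀ t ∈ Ico a b, HasDerivWithinAt w (w' t) (Ici t) t)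
    (hg : ContinuousOn g (Icc a b)) (hg' : ∀ t ∈ Ico a b, HasDerivWithinAt g (g' t) (Ici t) t)
    (hδ : ∀ t ∈ Icc a b, ‖g t‖ ≤ δ) (hbound : ∀ t ∈ Ico a b, ‖w' t - g' t‖ ≤ K * ‖w t‖) :
    ∀ t ∈ Icc a b, ‖w t‖ ≤ (‖w a - g a‖ + δ) * exp (K * (t - a)) := by
  intro t ht
  have hw_le : ∀ s ∈ Icc a b, ‖w s‖ ≤ ‖(w - g) s‖ + δ := fun s hs =>
    (norm_le_norm_sub_add (w s) (g s)).trans (add_le_add_right (hδ s hs) _)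
  have hdiff : ‖(w - g) t‖ ≤ gronwallBound ‖w a - g a‖ K (K * δ) (t - a) := by
    refine norm_le_gronwallBound_of_norm_deriv_right_le (hw.sub hg)
      (fun s hs => (hw' s hs).sub (hg' s hs)) le_rfl (fun s hs => ?_) t ht
    calc ‖w' s - g' s‖ ≤ K * ‖w s‖ := hbound s hs
      _ ≤ K * (‖(w - g) s‖ + δ) := by gcongr; exact hw_le s (Ico_subset_Icc_self hs)
      _ = K * ‖(w - g) s‖ + K * δ := mul_add _ _ _
  calc ‖w t‖ ≤ ‖(w - g) t‖ + δ := hw_le t ht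
    _ ≤ (‖w a - g a‖ + δ) * exp (K * (t - a)) := by
        rw [gronwallBound_ε_eq_K_mul] at hdiff
        linarith

theorem statement15_general {X : Type*} [NormedAddCommGroup X] [NormedSpace ℝ X] [CompleteSpace X]
    {ε T 𝓛 B : ℝ} {C : ℝ≥0} (hε : 0 < ε) (h𝓛 : 0 ≤ 𝓛)
    {F : ℝ → X → X} (hF : ∀ t ∈ Icc 0 T, ∀ x, ‖F t x‖ ≤ 𝓛 * ‖x‖)
    {b : ℝ → ℝ → X} (hb : Continuous (uncurry b)) (hper : ∀ t, Periodic (fun θ => b θ t) 1)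
    (hzero : ∀ t ∈ Icc 0 T, ∫ θ in (0 : ℝ)..1, b θ t = 0)
    (hB : ∀ θ, ∀ t ∈ Icc 0 T, ‖b θ t‖ ≤ B) (hlip : ∀ θ, LipschitzOnWith C (b θ) (Icc 0 T))
    {w : ℝ → X} (hw : ContinuousOn w (Icc 0 T))
    (hw' : ∀ t ∈ Ico 0 T, HasDerivWithinAt w (F t (w t) + b (t / ε) t) (Ici t) t) :
    ∀ t ∈ Icc 0 T, ‖w t‖ ≤ (‖w 0‖ + (B + C * t) * ε) * exp (𝓛 * t) := by
  intro t ht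
  have hsub : Icc 0 t ⊆ Icc 0 T := Icc_subset_Icc_right ht.2
  have hsub' : Ico 0 t ⊆ Ico 0 T := Ico_subset_Ico_right ht.2
  have hsource : Continuous fun s => b (s / ε) s :=
    hb.comp ((continuous_id.div_const ε).prodMk continuous_id)
  set g : ℝ → X := fun s => ∫ r in (0 : ℝ)..s, b (r / ε) r
  have hg' : ∀ s, HasDerivAt g (b (s / ε) s) s := fun s =>
    (hsource.integral_hasStrictDerivAt 0 s).hasDerivAt
  have hg0 : g 0 = 0 := intervalIntegral.integral_same
  have hg_le : ∀ s ∈ Icc 0 t, ‖g s‖ ≤ (B + C * t) * ε := by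
    intro s hs
    have hs_sub : Icc 0 s ⊆ Icc 0 T := (Icc_subset_Icc_right hs.2).trans hsub
    calc ‖g s‖ ≤ (B + C * s) * ε :=
          norm_integral_oscillatory_le hε hs.1 hb hper (fun r hr => hzero r (hs_sub hr))
            (fun θ r hr => hB θ r (hs_sub hr)) fun θ => (hlip θ).mono hs_sub
      _ ≤ (B + C * t) * ε := by gcongr; exact hs.2
  have hdev : ∀ s ∈ Ico 0 t, ‖F s (w s) + b (s / ε) s - b (s / ε) s‖ ≤ 𝓛 * ‖w s‖ := by
    intro s hs
    rw [add_sub_cancel_right]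
    exact hF s (Ico_subset_Icc_self (hsub' hs)) (w s)
  simpa only [hg0, sub_zero] using norm_le_mul_exp_of_norm_deriv_right_sub_le h𝓛 (hw.mono hsub)
    (fun s hs => hw' s (hsub' hs)) (fun s _ => (hg' s).continuousAt.continuousWithinAt)
    (fun s _ => (hg' s).hasDerivWithinAt) hg_le hdev t (right_mem_Icc.2 ht.1)

/-- Gronwall-type estimate for a micro variable driven by a zero-average oscillatory
source: there is a constant `M₀` (independent of `ε`, `B`, `𝓛` and `w`) such that any
solution of `ẇ = L(t)w + b(t/ε, t)`, `w(0) = 0`, with `‖L(t)‖ ≤ 𝓛`, `b` 1-periodic with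
zero θ-average and `b, ∂_θ b, ∂_t b` bounded by `B`, satisfies
`‖w(t)‖ ≤ M₀ B e^{𝓛 t} ε` on `[0,1]`. -/
theorem statement15
    {X : Type*} [NormedAddCommGroup X] [NormedSpace ℝ X] [CompleteSpace X] :
    ∃ M₀ : ℝ, 0 < M₀ ∧
      ∀ ε : ℝ, ε ∈ Set.Ioc (0:ℝ) 1 →
      ∀ L : ℝ → X →L[ℝ] X, ContinuousOn L (Set.Icc (0:ℝ) 1) →
      ∀ 𝓛 : ℝ, (∀ t ∈ Set.Icc (0:ℝ) 1, ‖L t‖ ≤ 𝓛) →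
      ∀ b : ℝ → ℝ → X, ContDiff ℝ 1 (fun p : ℝ × ℝ => b p.1 p.2) →
      (∀ t, Function.Periodic (fun θ => b θ t) 1) →
      (∀ t ∈ Set.Icc (0:ℝ) 1, (∫ θ in (0:ℝ)..1, b θ t) = 0) →
      ∀ B : ℝ,
      (∀ θ : ℝ, ∀ t ∈ Set.Icc (0:ℝ) 1, ‖b θ t‖ ≤ B) →
      (∀ θ : ℝ, ∀ t ∈ Set.Icc (0:ℝ) 1, ‖deriv (fun θ' => b θ' t) θ‖ ≤ B) →
      (∀ θ : ℝ, ∀ t ∈ Set.Icc (0:ℝ) 1, ‖deriv (fun t' => b θ t') t‖ ≤ B) →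
      ∀ w : ℝ → X, w 0 = 0 →
      (∀ t ∈ Set.Icc (0:ℝ) 1, HasDerivAt w (L t (w t) + b (t/ε) t) t) →
      ∀ t ∈ Set.Icc (0:ℝ) 1, ‖w t‖ ≤ M₀ * B * Real.exp (𝓛 * t) * ε := by
  refine ⟨2, two_pos, fun ε hε L _ 𝓛 hL b hb hper hzero B hB _ hBt w hw0 hw t ht => ?_⟩
  lift B to ℝ≥0 using (norm_nonneg _).trans (hB 0 t ht)
  have hlip (θ : ℝ) : LipschitzOnWith B (b θ) (Icc 0 1) :=
    (convex_Icc 0 1).lipschitzOnWith_of_nnnorm_deriv_le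
      (fun s _ => (hb.differentiable one_ne_zero).comp (f := fun s : ℝ => (θ, s)) (by fun_prop) s)
      (hBt θ)
  calc ‖w t‖ ≤ (‖w 0‖ + (B + B * t) * ε) * Real.exp (𝓛 * t) :=
        statement15_general hε.1 ((norm_nonneg _).trans (hL t ht))
          (fun s hs => (L s).le_of_opNorm_le (hL s hs)) hb.continuous hper hzero hB hlip
          (fun s hs => (hw s hs).continuousAt.continuousWithinAt)
          (fun s hs => (hw s (Ico_subset_Icc_self hs)).hasDerivWithinAt) t ht
    _ ≤ (‖w 0‖ + (B + B * 1) * ε) * Real.exp (𝓛 * t) := by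
        have hε_pos := hε.1
        gcongr
        exact ht.2
    _ = 2 * B * Real.exp (𝓛 * t) * ε := by rw [hw0, norm_zero]; ring
end

section
/- Let S be a skew-symmetric real d×d matrix (Sᵀ = −S), let I : ℝ^d → ℝ be continuously differentiable with gradient ∇I, and let ε ∈ ℝ. If v, Φ ∈ ℝ^d satisfy the averaged-vector-field relation Φ = v + ε·S·∫₀¹ ∇I( μΦ + (1−μ)v ) dμ, then I(Φ) = I(v). -/
open Matrix

/-!
By the fundamental theorem of calculus, `I Φ - I v` is the value at `Φ - v` of the average `ℓ` of
the differential of `I` over the segment from `v` to `Φ`. The averaged-vector-field relation says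
that `Φ - v` is a multiple of the image of this same `ℓ` under a skew map, and skewness means that
`ℓ` vanishes on its own image.
-/

theorem dotProduct_mulVec_self_eq_zero_of_transpose_eq_neg {ι R : Type*} [Fintype ι] [CommRing R]
    [IsAddTorsionFree R] {S : Matrix ι ι R} (hS : Sᵀ = -S) (x : ι → R) : x ⬝ᵥ S *ᵥ x = 0 := by
  rw [← self_eq_neg]
  calc x ⬝ᵥ S *ᵥ x = x ⬝ᵥ Sᵀ *ᵥ x := (dotProduct_transpose_mulVec S x x).symm
    _ = -(x ⬝ᵥ S *ᵥ x) := by rw [hS, neg_mulVec, dotProduct_neg]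

section Segment

variable {E F : Type*} [NormedAddCommGroup E] [NormedSpace ℝ E] [NormedAddCommGroup F]
  [NormedSpace ℝ F] {f : E → F}

theorem hasDerivAt_comp_segment {a b : E} {μ : ℝ}
    (hf : DifferentiableAt ℝ f (μ • b + (1 - μ) • a)) :
    HasDerivAt (fun μ : ℝ => f (μ • b + (1 - μ) • a))
      (fderiv ℝ f (μ • b + (1 - μ) • a) (b - a)) μ := by
  have h_segment : HasDerivAt (fun μ : ℝ => μ • b + (1 - μ) • a) (b - a) μ := by
    refine AffineMap.hasDerivAt_lineMap.congr_of_eventuallyEq (.of_forall fun t => ?_)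
    rw [AffineMap.lineMap_apply_module, add_comm]
  exact hf.hasFDerivAt.comp_hasDerivAt μ h_segment

theorem continuous_fderiv_segment (hf : ContDiff ℝ 1 f) (a b : E) :
    Continuous fun μ : ℝ => fderiv ℝ f (μ • b + (1 - μ) • a) :=
  (hf.continuous_fderiv one_ne_zero).comp (by fun_prop)

theorem integral_fderiv_segment_apply_sub [CompleteSpace F] (hf : ContDiff ℝ 1 f) (a b : E) :
    (∫ μ in (0 : ℝ)..1, fderiv ℝ f (μ • b + (1 - μ) • a)) (b - a) = f b - f a := by
  have h_cont := continuous_fderiv_segment hf a b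
  rw [ContinuousLinearMap.intervalIntegral_apply (h_cont.intervalIntegrable 0 1),
    intervalIntegral.integral_eq_sub_of_hasDerivAt
      (fun μ _ => hasDerivAt_comp_segment (hf.differentiable one_ne_zero _))
      ((h_cont.clm_apply continuous_const).intervalIntegrable 0 1)]
  simp

end Segment

section DualCoord

variable {𝕜 ι : Type*} [NontriviallyNormedField 𝕜] [CompleteSpace 𝕜] [Fintype ι] [DecidableEq ι]

variable (𝕜 ι) in
/-- The coordinate vector `i ↦ ℓ (eᵢ)` of a linear functional `ℓ` on `𝕜^ι`. It turns the
differential of a function into its gradient for the dot product. -/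
noncomputable def dualCoord : StrongDual 𝕜 (ι → 𝕜) ≃L[𝕜] (ι → 𝕜) :=
  ContinuousLinearEquiv.piRing ι

theorem dualCoord_symm_apply (a w : ι → 𝕜) : (dualCoord 𝕜 ι).symm a w = a ⬝ᵥ w :=
  (LinearEquiv.piRing_symm_apply (S := 𝕜) a w).trans (dotProduct_comm w a)

theorem dualCoord_eq_iff {ℓ : StrongDual 𝕜 (ι → 𝕜)} {a : ι → 𝕜} :
    dualCoord 𝕜 ι ℓ = a ↔ ∀ w, ℓ w = a ⬝ᵥ w := by
  simp only [← ContinuousLinearEquiv.eq_symm_apply, ContinuousLinearMap.ext_iff,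
    dualCoord_symm_apply]

theorem apply_mulVec_dualCoord_eq_zero [IsAddTorsionFree 𝕜] {S : Matrix ι ι 𝕜} (hS : Sᵀ = -S)
    (ℓ : StrongDual 𝕜 (ι → 𝕜)) : ℓ (S *ᵥ dualCoord 𝕜 ι ℓ) = 0 := by
  rw [dualCoord_eq_iff.mp rfl]
  exact dotProduct_mulVec_self_eq_zero_of_transpose_eq_neg hS _

theorem integral_gradient_segment_eq_dualCoord {f : (ι → ℝ) → ℝ} (hf : ContDiff ℝ 1 f)
    {g : (ι → ℝ) → ι → ℝ} (hg : ∀ u w, fderiv ℝ f u w = g u ⬝ᵥ w) (a b : ι → ℝ) :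
    ∫ μ in (0 : ℝ)..1, g (μ • b + (1 - μ) • a) =
      dualCoord ℝ ι (∫ μ in (0 : ℝ)..1, fderiv ℝ f (μ • b + (1 - μ) • a)) := by
  have h_grad (u) : g u = dualCoord ℝ ι (fderiv ℝ f u) := (dualCoord_eq_iff.mpr (hg u)).symm
  simp only [h_grad]
  exact (dualCoord ℝ ι).toContinuousLinearMap.intervalIntegral_comp_comm
    ((continuous_fderiv_segment hf a b).intervalIntegrable 0 1)

end DualCoord

theorem statement17_general {E : Type*} [NormedAddCommGroup E] [NormedSpace ℝ E]
    (J : StrongDual ℝ E → E) (hJ : ∀ ℓ : StrongDual ℝ E, ℓ (J ℓ) = 0)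
    (I : E → ℝ) (hI : ContDiff ℝ 1 I) (ε : ℝ) (v Φ : E)
    (havf : Φ = v + ε • J (∫ μ in (0 : ℝ)..1, fderiv ℝ I (μ • Φ + (1 - μ) • v))) :
    I Φ = I v := by
  rw [← sub_eq_zero, ← integral_fderiv_segment_apply_sub hI v Φ]
  set ℓ := ∫ μ in (0 : ℝ)..1, fderiv ℝ I (μ • Φ + (1 - μ) • v)
  calc ℓ (Φ - v) = ℓ (ε • J ℓ) := by rw [sub_eq_of_eq_add' havf]
    _ = 0 := by rw [map_smul, hJ, smul_zero]

/-- The averaged-vector-field change of variable preserves the first integral `I`: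
if `S` is skew-symmetric, `I` is `C¹` with gradient `g`, and
`Φ = v + ε·S·∫₀¹ ∇I(μΦ + (1−μ)v) dμ`, then `I(Φ) = I(v)`. -/
theorem statement17 (d : ℕ)
    (S : Matrix (Fin d) (Fin d) ℝ) (hS : Sᵀ = -S)
    (I : (Fin d → ℝ) → ℝ) (hI : ContDiff ℝ 1 I)
    (g : (Fin d → ℝ) → (Fin d → ℝ))
    (hg : ∀ u w : Fin d → ℝ, fderiv ℝ I u w = ∑ i, g u i * w i)
    (ε : ℝ) (v Φ : Fin d → ℝ)
    (havf : Φ = v + ε • S.mulVec (∫ μ in (0:ℝ)..1, g (μ • Φ + (1-μ) • v))) :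
    I Φ = I v := by
  rw [integral_gradient_segment_eq_dualCoord hI hg] at havf
  exact statement17_general _ (apply_mulVec_dualCoord_eq_zero hS) I hI ε v Φ havf
end
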